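/- arXiv:1207.1233 — 3 statements merged into one kernel-verified Lean document; each statement's English description precedes it below -/
import Mathlib

section
/- Let A ⊆ {0,1}^n and let g : {0,1}^n → ℝ be a function vanishing outside A. Then E(g,g) ≥ 2 · (1/(2^n · |A|)) · log₂(2^n/|A|) · (∑_{x∈A} |g(x)|)², where E(g,g) = (1/2^n) ∑_x ∑_{y∼x} (g(x) − g(y))². -/
open Finset

/-- Logarithmic facts: `t = log₂(2m/(m+a))`. -/
lemma log_facts (a m : ℝ) (ha : 0 < a) (hm : a ≤ m) :
    0 ≤ Real.logb 2 (2 * m / (m + a)) ∧ Real.logb 2 (2 * m / (m + a)) ≤ 1 - a / m ∧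
    2 * Real.logb 2 (2 * m / (m + a)) ≤ Real.logb 2 (m / a) := by
  have hm0 : 0 < m := by linarith
  refine ⟨?_, ?_, ?_⟩
  · apply Real.logb_nonneg (by norm_num)
    rw [le_div_iff₀ (by linarith)]
    linarith
  · have h1 : Real.logb 2 (2 * m / (m + a)) = 1 - Real.logb 2 (1 + a / m) := by
      have : 2 * m / (m + a) = 2 / (1 + a / m) := by field_simp
      rw [this, Real.logb_div (by norm_num) (by positivity)]
      simp
    have h2 : a / m ≤ Real.logb 2 (1 + a / m) := by
      rw [Real.le_logb_iff_rpow_le (by norm_num) (by positivity)]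
      have := rpow_one_add_le_one_add_mul_self (s := 1) (p := a / m) (by norm_num)
        (by positivity) (by rw [div_le_one hm0]; exact hm)
      norm_num at this
      exact this
    linarith
  · have : 2 * Real.logb 2 (2 * m / (m + a)) = Real.logb 2 ((2 * m / (m + a)) ^ 2) := by
      rw [Real.logb_pow]; norm_num
    rw [this]
    apply Real.logb_le_logb_of_le (by norm_num) (by positivity)
    rw [div_pow, div_le_div_iff₀ (by positivity) ha]
    nlinarith [mul_nonneg hm0.le (sq_nonneg (m - a))]

lemma two_point (N a m s r : ℝ) (ha : 0 < a) (hm : a ≤ m) (hN : m ≤ N) :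
    Real.logb 2 (2 * N / (m + a)) * (s + r) ^ 2 / (m + a) ≤
      Real.logb 2 (N / m) * s ^ 2 / m + Real.logb 2 (N / a) * r ^ 2 / a + (s - r) ^ 2 / m := by
  have hm0 : 0 < m := by linarith
  have hN0 : 0 < N := by linarith
  obtain ⟨t0, t1, t2⟩ := log_facts a m ha hm
  have e1 : Real.logb 2 (2 * N / (m + a)) =
      Real.logb 2 (N / m) + Real.logb 2 (2 * m / (m + a)) := by
    rw [← Real.logb_mul (by positivity) (by positivity)]
    congr 1; field_simp
  have e2 : Real.logb 2 (N / a) = Real.logb 2 (N / m) + Real.logb 2 (m / a) := by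
    rw [← Real.logb_mul (by positivity) (by positivity)]
    congr 1; field_simp
  have hP : 0 ≤ Real.logb 2 (N / m) := by
    apply Real.logb_nonneg (by norm_num)
    rw [le_div_iff₀ hm0]; linarith
  rw [e1, e2]
  generalize Real.logb 2 (N / m) = P at *
  generalize Real.logb 2 (2 * m / (m + a)) = t at *
  generalize Real.logb 2 (m / a) = L at *
  have c1 : (s + r) ^ 2 / (m + a) ≤ s ^ 2 / m + r ^ 2 / a := by
    rw [div_add_div _ _ hm0.ne' ha.ne', div_le_div_iff₀ (by positivity) (by positivity)]
    nlinarith [sq_nonneg (s * a - r * m)]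
  have c2 : t * ((s + r) ^ 2 / (m + a)) ≤ 2 * t * (r ^ 2 / a) + (s - r) ^ 2 / m := by
    by_cases hX : (s + r) ^ 2 / (m + a) ≤ 2 * (r ^ 2 / a)
    · have := mul_le_mul_of_nonneg_left hX t0
      have : 0 ≤ (s - r) ^ 2 / m := by positivity
      linarith
    · push Not at hX
      have h1 := mul_le_mul_of_nonneg_right t1 (sub_nonneg.2 hX.le)
      have h2 : 2 * (1 - a / m) * (r ^ 2 / a) + (s - r) ^ 2 / m
          - (1 - a / m) * ((s + r) ^ 2 / (m + a)) = 2 * (r * m - s * a) ^ 2 / (m ^ 2 * a * (m + a)) * m := by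
        field_simp
        ring
      have h3 : 0 ≤ 2 * (r * m - s * a) ^ 2 / (m ^ 2 * a * (m + a)) * m := by positivity
      linarith
  have c3 : 2 * t * (r ^ 2 / a) ≤ L * (r ^ 2 / a) :=
    mul_le_mul_of_nonneg_right t2 (by positivity)
  have c4 := mul_le_mul_of_nonneg_left c1 hP
  have : (P + t) * (s + r) ^ 2 / (m + a) = P * ((s + r) ^ 2 / (m + a)) + t * ((s + r) ^ 2 / (m + a)) := by
    ring
  rw [this]
  have : P * s ^ 2 / m + (P + L) * r ^ 2 / a = P * (s ^ 2 / m + r ^ 2 / a) + L * (r ^ 2 / a) := by ring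
  rw [this]
  linarith

lemma diff_bound {α : Type*} [Fintype α] [DecidableEq α] (A B : Finset α) (f g : α → ℝ)
    (hf : ∀ x, x ∉ A → f x = 0) (hg : ∀ x, 0 ≤ g x)
    (h : ∑ x, g x ≤ ∑ x, f x) :
    (∑ x, f x - ∑ x, g x) ^ 2 ≤ (A.card : ℝ) * ∑ x, (f x - g x) ^ 2 := by
  have h1 : ∑ x, f x - ∑ x, g x ≤ ∑ x ∈ A, (f x - g x) := by
    rw [← sum_sub_distrib, ← sum_add_sum_compl A]
    have : ∑ x ∈ Aᶜ, (f x - g x) ≤ 0 := by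
      apply sum_nonpos
      intro x hx
      rw [hf x (by simpa using hx)]
      linarith [hg x]
    linarith
  calc (∑ x, f x - ∑ x, g x) ^ 2 ≤ (∑ x ∈ A, (f x - g x)) ^ 2 :=
        pow_le_pow_left₀ (by linarith) h1 2
    _ ≤ (A.card : ℝ) * ∑ x ∈ A, (f x - g x) ^ 2 := sq_sum_le_card_mul_sum_sq
    _ ≤ _ := by
        apply mul_le_mul_of_nonneg_left _ (by positivity)
        exact sum_le_univ_sum_of_nonneg (fun x => sq_nonneg _)

lemma combine {α : Type*} [Fintype α] [DecidableEq α] (A B : Finset α) (f g : α → ℝ) (N : ℝ)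
    (hN : 0 < N) (hAN : (A.card : ℝ) ≤ N) (hBN : (B.card : ℝ) ≤ N)
    (hf : ∀ x, x ∉ A → f x = 0) (hg : ∀ x, x ∉ B → g x = 0)
    (hf0 : ∀ x, 0 ≤ f x) (hg0 : ∀ x, 0 ≤ g x) (hAB : B.card ≤ A.card) :
    Real.logb 2 (2 * N / (A.card + B.card)) * (∑ x, f x + ∑ x, g x) ^ 2 / (A.card + B.card) ≤
      Real.logb 2 (N / A.card) * (∑ x, f x) ^ 2 / A.card
      + Real.logb 2 (N / B.card) * (∑ x, g x) ^ 2 / B.card + ∑ x, (f x - g x) ^ 2 := by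
  have hAB' : (B.card : ℝ) ≤ A.card := by exact_mod_cast hAB
  have key : (∑ x, f x - ∑ x, g x) ^ 2 ≤ (A.card : ℝ) * ∑ x, (f x - g x) ^ 2 := by
    rcases le_total (∑ x, g x) (∑ x, f x) with h | h
    · exact diff_bound A B f g hf hg0 h
    · have := diff_bound B A g f hg hf0 h
      have e : ∑ x, (g x - f x) ^ 2 = ∑ x, (f x - g x) ^ 2 :=
        sum_congr rfl (fun x _ => by ring)
      rw [e] at this
      have h2 : (B.card : ℝ) * ∑ x, (f x - g x) ^ 2 ≤ (A.card : ℝ) * ∑ x, (f x - g x) ^ 2 :=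
        mul_le_mul_of_nonneg_right hAB' (sum_nonneg (fun x _ => sq_nonneg _))
      nlinarith
  rcases Nat.eq_zero_or_pos A.card with hA | hA
  · have hB : B.card = 0 := by omega
    simp [hA, hB]
    exact sum_nonneg (fun x _ => sq_nonneg _)
  have hA' : (0 : ℝ) < A.card := by exact_mod_cast hA
  have key2 : (∑ x, f x - ∑ x, g x) ^ 2 / A.card ≤ ∑ x, (f x - g x) ^ 2 := by
    rw [div_le_iff₀ hA']; linarith
  rcases Nat.eq_zero_or_pos B.card with hB | hB
  · have hB0 : B = ∅ := by simpa using hB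
    have hs : ∑ x, g x = 0 := sum_eq_zero (fun x _ => hg x (by simp [hB0]))
    rw [hs] at key2 ⊢
    simp only [hB, Nat.cast_zero, add_zero, sub_zero] at *
    have e1 : Real.logb 2 (2 * N / A.card) = 1 + Real.logb 2 (N / A.card) := by
      rw [mul_div_assoc, Real.logb_mul (by norm_num) (by positivity)]
      simp
    rw [e1]
    have : (1 + Real.logb 2 (N / A.card)) * (∑ x, f x) ^ 2 / A.card =
      (∑ x, f x) ^ 2 / A.card + Real.logb 2 (N / A.card) * (∑ x, f x) ^ 2 / A.card := by ring
    rw [this]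
    simp
    linarith
  · have hB' : (0 : ℝ) < B.card := by exact_mod_cast hB
    have := two_point N B.card A.card (∑ x, f x) (∑ x, g x) hB' hAB' hAN
    linarith

lemma sum_split (n : ℕ) (F : (Fin (n + 1) → Bool) → ℝ) :
    ∑ x, F x = ∑ x : Fin n → Bool, F (Fin.cons false x) + ∑ x : Fin n → Bool, F (Fin.cons true x) := by
  rw [← (Fin.consEquiv (fun _ : Fin (n + 1) => Bool)).sum_comp, Fintype.sum_prod_type]
  simp [Fin.consEquiv, add_comm]

lemma main_ind (n : ℕ) : ∀ (A : Finset (Fin n → Bool)) (g : (Fin n → Bool) → ℝ)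
    (_ : ∀ x, x ∉ A → g x = 0) (_ : ∀ x, 0 ≤ g x),
    2 * (Real.logb 2 ((2 : ℝ) ^ n / (A.card : ℝ)) * (∑ x, g x) ^ 2 / A.card) ≤
      ∑ x : Fin n → Bool, ∑ i, (g x - g (Function.update x i (!x i))) ^ 2 := by
  induction n with
  | zero =>
    intro A g hg _
    have : A.card ≤ 1 := by
      have := A.card_le_univ
      simpa using this
    interval_cases h : A.card <;> simp
  | succ n ih =>
    intro A g hg hg0
    set A0 : Finset (Fin n → Bool) := univ.filter (fun x => (Fin.cons false x : Fin (n+1) → Bool) ∈ A) with hA0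
    set A1 : Finset (Fin n → Bool) := univ.filter (fun x => (Fin.cons true x : Fin (n+1) → Bool) ∈ A) with hA1
    have hc : (A.card : ℝ) = A0.card + A1.card := by
      have : (A.card : ℝ) = ∑ x, if x ∈ A then (1 : ℝ) else 0 := by simp
      rw [this, sum_split]
      simp [hA0, hA1]
    set f0 : (Fin n → Bool) → ℝ := fun x => g (Fin.cons false x) with hf0
    set f1 : (Fin n → Bool) → ℝ := fun x => g (Fin.cons true x) with hf1
    have z0 : ∀ x, x ∉ A0 → f0 x = 0 := fun x hx => hg _ (by simpa [hA0] using hx)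
    have z1 : ∀ x, x ∉ A1 → f1 x = 0 := fun x hx => hg _ (by simpa [hA1] using hx)
    have i0 := ih A0 f0 z0 (fun x => hg0 _)
    have i1 := ih A1 f1 z1 (fun x => hg0 _)
    have hs : ∑ x, g x = ∑ x, f0 x + ∑ x, f1 x := sum_split n g
    have hE : ∑ x : Fin (n + 1) → Bool, ∑ i, (g x - g (Function.update x i (!x i))) ^ 2
        = ∑ x : Fin n → Bool, ∑ i, (f0 x - f0 (Function.update x i (!x i))) ^ 2
        + ∑ x : Fin n → Bool, ∑ i, (f1 x - f1 (Function.update x i (!x i))) ^ 2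
        + 2 * ∑ x, (f0 x - f1 x) ^ 2 := by
      rw [sum_split]
      simp only [Fin.sum_univ_succ, Fin.cons_zero, Fin.cons_succ, Fin.update_cons_zero,
        ← Fin.cons_update, Bool.not_false, Bool.not_true, sum_add_distrib]
      have : ∑ x, (f1 x - f0 x) ^ 2 = ∑ x, (f0 x - f1 x) ^ 2 :=
        sum_congr rfl (fun x _ => by ring)
      simp only [hf0, hf1] at this ⊢
      rw [this]
      ring
    have card_le : ∀ B : Finset (Fin n → Bool), (B.card : ℝ) ≤ 2 ^ n := by
      intro B
      have := B.card_le_univ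
      simp at this
      exact_mod_cast this
    rw [hE, hc, hs, pow_succ, mul_comm ((2:ℝ) ^ n) 2]
    rcases le_total A1.card A0.card with h | h
    · have := combine A0 A1 f0 f1 (2 ^ n) (by positivity) (card_le _) (card_le _) z0 z1
        (fun x => hg0 _) (fun x => hg0 _) h
      linarith
    · have := combine A1 A0 f1 f0 (2 ^ n) (by positivity) (card_le _) (card_le _) z1 z0
        (fun x => hg0 _) (fun x => hg0 _) h
      have e : ∑ x, (f1 x - f0 x) ^ 2 = ∑ x, (f0 x - f1 x) ^ 2 :=
        sum_congr rfl (fun x _ => by ring)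
      rw [e, add_comm (A1.card : ℝ), add_comm (∑ x, f1 x)] at this
      linarith

lemma nbr_sum (n : ℕ) (x : Fin n → Bool) (F : (Fin n → Bool) → ℝ) :
    ∑ y ∈ univ.filter (fun y => (univ.filter fun i => x i ≠ y i).card = 1), F y
      = ∑ i, F (Function.update x i (!x i)) := by
  symm
  apply sum_bij (fun i _ => Function.update x i (!x i))
  · intro i _
    simp only [mem_filter, mem_univ, true_and]
    rw [card_eq_one]
    refine ⟨i, ?_⟩
    ext j
    by_cases h : j = i
    · subst h; simp
    · simp [h]
  · intro i _ j _ h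
    by_contra hij
    have := congrFun h i
    simp [hij] at this
  · intro y hy
    simp only [mem_filter, mem_univ, true_and] at hy
    obtain ⟨i, hi⟩ := card_eq_one.1 hy
    refine ⟨i, mem_univ _, ?_⟩
    ext1 j
    have hj : x j ≠ y j ↔ j = i := by
      have := Finset.ext_iff.1 hi j
      simpa using this
    by_cases h : j = i
    · subst h
      have := hj.2 rfl
      simp only [Function.update_self]
      revert this
      cases x j <;> cases y j <;> simp
    · have : x j = y j := by
        by_contra h'
        exact h (hj.1 h')
      simp [h, this]
  · intro i _; rfl

/-- For `g` supported on `A ⊆ {0,1}^n`,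
`E(g,g) ≥ 2·(1/(2^n·|A|))·log₂(2^n/|A|)·(∑_{x∈A} |g(x)|)²`, where
`E(g,g) = (1/2^n) ∑_x ∑_{y∼x} (g(x)-g(y))²`. -/
theorem dirichlet_isoperimetric (n : ℕ) (A : Finset (Fin n → Bool)) (hA : A.Nonempty)
    (g : (Fin n → Bool) → ℝ) (hg : ∀ x, x ∉ A → g x = 0) :
    (1 / (2 : ℝ) ^ n) *
        ∑ x : Fin n → Bool, ∑ y ∈ univ.filter
            (fun y => (univ.filter fun i => x i ≠ y i).card = 1), (g x - g y) ^ 2 ≥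
      2 * (1 / ((2 : ℝ) ^ n * (A.card : ℝ))) * Real.logb 2 ((2 : ℝ) ^ n / (A.card : ℝ)) *
        (∑ x ∈ A, |g x|) ^ 2 := by
  have h := main_ind n A (fun x => |g x|) (fun x hx => by simp [hg x hx]) (fun x => abs_nonneg _)
  have hs : ∑ x ∈ A, |g x| = ∑ x, |g x| :=
    sum_subset (subset_univ _) (fun x _ hx => by simp [hg x hx])
  have hle : ∑ x : Fin n → Bool, ∑ i, (|g x| - |g (Function.update x i (!x i))|) ^ 2 ≤
      ∑ x : Fin n → Bool, ∑ i, (g x - g (Function.update x i (!x i))) ^ 2 := by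
    refine sum_le_sum (fun x _ => sum_le_sum (fun i _ => ?_))
    exact sq_le_sq.2 (abs_abs_sub_abs_le _ _)
  simp only [nbr_sum n _ (fun y => (g _ - g y) ^ 2)]
  rw [hs]
  have e : 2 * (1 / ((2 : ℝ) ^ n * (A.card : ℝ))) * Real.logb 2 ((2 : ℝ) ^ n / (A.card : ℝ)) *
        (∑ x, |g x|) ^ 2 = (1 / (2 : ℝ) ^ n) *
        (2 * (Real.logb 2 ((2 : ℝ) ^ n / (A.card : ℝ)) * (∑ x, |g x|) ^ 2 / A.card)) := by
    rw [one_div_mul_eq_div, mul_assoc, mul_assoc, one_div, mul_inv]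
    ring
  rw [e]
  exact mul_le_mul_of_nonneg_left (h.trans hle) (by positivity)
end

section
/- Let A be a proper nonempty subset of {0,1}^n. Let Y be the first exit time from A of a simple random walk on the hypercube started at a uniformly random point of A. Then E[Y] ≤ n / log₂(2^n / |A|). -/
open Finset

/-- Number of walks of length `k` inside `A` in the hypercube graph: sequences
`p : Fin (k+1) → {0,1}^n` with all points in `A` and consecutive points adjacent. -/
def walkCount (n : ℕ) (A : Finset (Fin n → Bool)) (k : ℕ) : ℕ :=
  ((univ : Finset (Fin (k + 1) → (Fin n → Bool))).filter
    (fun p => (∀ j, p j ∈ A) ∧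
      ∀ j : Fin k, (univ.filter fun i => p j.castSucc i ≠ p j.succ i).card = 1)).card

/-- Flip coordinate `i`. -/
def flipAt {n : ℕ} (i : Fin n) (x : Fin n → Bool) : Fin n → Bool :=
  Function.update x i (!x i)

lemma flipAt_invol {n : ℕ} (i : Fin n) (x : Fin n → Bool) : flipAt i (flipAt i x) = x := by
  simp [flipAt]

lemma sum_flipAt {n : ℕ} (i : Fin n) (f : (Fin n → Bool) → ℝ) :
    ∑ x, f (flipAt i x) = ∑ x, f x :=
  Equiv.sum_comp (Function.Involutive.toPerm (flipAt i) (flipAt_invol i)) f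

lemma adj_iff {n : ℕ} (x z : Fin n → Bool) :
    (if (univ.filter fun i => x i ≠ z i).card = 1 then (1 : ℝ) else 0) =
      ∑ i, if z = flipAt i x then (1 : ℝ) else 0 := by
  have key : ∀ i, z = flipAt i x ↔ (univ.filter fun i => x i ≠ z i) = {i} := by
    intro i
    constructor
    · rintro rfl
      ext j
      by_cases h : j = i
      · subst h; simp only [mem_filter]; simp [flipAt]
      · simp only [mem_filter]; simp [flipAt, h]
    · intro h
      ext j
      have hj := Finset.ext_iff.1 h j
      by_cases h : j = i
      · subst h
        simp at hj
        simp only [flipAt, Function.update_self]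
        cases h1 : x j <;> cases h2 : z j <;> simp_all
      · simp [h] at hj
        simp [flipAt, h, hj]
  simp only [key, Finset.card_eq_one]
  split_ifs with h
  · obtain ⟨a, ha⟩ := h
    simp [ha]
  · push Not at h
    simp [h]

/-- Real-analytic one-step inequality. -/
lemma step_aux (a b s t m : ℝ) (hb : 0 < b) (hba : b ≤ a) (hm : Real.logb 2 a ≤ m) :
    (s + t) ^ 2 * (m + 1 - Real.logb 2 (a + b)) / (a + b) ≤
      s ^ 2 * (m - Real.logb 2 a) / a + t ^ 2 * (m - Real.logb 2 b) / b + (s - t) ^ 2 / a := by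
  have ha : 0 < a := by linarith
  obtain ⟨β, rfl⟩ : ∃ β, b = a * β := ⟨b / a, by field_simp⟩
  have hβ : 0 < β := by exact pos_of_mul_pos_right hb ha.le
  have hβ1 : β ≤ 1 := by nlinarith
  have e1 : Real.logb 2 (a * β) = Real.logb 2 a + Real.logb 2 β :=
    Real.logb_mul ha.ne' hβ.ne'
  have e2 : Real.logb 2 (a + a * β) = Real.logb 2 a + Real.logb 2 (1 + β) := by
    rw [← Real.logb_mul ha.ne' (by positivity)]; ring_nf
  rw [e1, e2]
  set q := Real.logb 2 (1 + β) with hq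
  set y := Real.logb 2 β with hy
  obtain ⟨d, hd0, rfl⟩ : ∃ d, 0 ≤ d ∧ m = Real.logb 2 a + d := ⟨m - Real.logb 2 a, by linarith, by ring⟩
  have hqβ : β ≤ q := by
    rw [hq, Real.le_logb_iff_rpow_le (by norm_num) (by positivity)]
    have := rpow_one_add_le_one_add_mul_self (s := 1) (p := β) (by norm_num) hβ.le hβ1
    norm_num at this
    linarith
  have hq1 : q ≤ 1 := by
    rw [hq, Real.logb_le_iff_le_rpow (by norm_num) (by positivity)]
    norm_num; linarith
  have hyq : 2 + y ≤ 2 * q := by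
    have h4 : Real.logb 2 (4 * β) ≤ Real.logb 2 ((1 + β) ^ 2) :=
      Real.logb_le_logb_of_le (by norm_num) (by positivity) (by nlinarith [sq_nonneg (1 - β)])
    rw [Real.logb_mul (by norm_num) hβ.ne', Real.logb_pow] at h4
    have : Real.logb 2 4 = 2 := by
      rw [show (4 : ℝ) = 2 ^ (2 : ℕ) by norm_num, Real.logb_pow]; simp
    rw [this] at h4
    push_cast at h4
    linarith
  have main : 0 ≤ s ^ 2 * d * β * (1 + β) + t ^ 2 * (d - y) * (1 + β) + (s - t) ^ 2 * β * (1 + β)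
      - (s + t) ^ 2 * (d + 1 - q) * β := by
    -- with r = 1 - q, -y ≥ 2 r
    have h1 : 0 ≤ d * (s * β - t) ^ 2 := by positivity
    have h2 : 0 ≤ t ^ 2 * (1 + β) * (-y - 2 * (1 - q)) := by
      apply mul_nonneg (by positivity); linarith
    have h3 : 0 ≤ t ^ 2 * (1 + β) * (2 * (1 - q)) + (s - t) ^ 2 * β * (1 + β)
        - (s + t) ^ 2 * (1 - q) * β := by
      obtain ⟨l, hl0, hl1, hl⟩ : ∃ l, 0 ≤ l ∧ l ≤ 1 ∧ 1 - q = l * (1 - β) := by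
        rcases hβ1.lt_or_eq with h | h
        · have : 0 < 1 - β := by linarith
          refine ⟨(1 - q) / (1 - β), div_nonneg (by linarith) this.le, ?_, by field_simp⟩
          rw [div_le_one this]; linarith
        · exact ⟨0, le_rfl, by norm_num, by linarith⟩
      rw [hl]
      have g1 : 0 ≤ l * (2 * (β * s - t) ^ 2) := by positivity
      have g2 : 0 ≤ (1 - l) * ((s - t) ^ 2 * β * (1 + β)) :=
        mul_nonneg (by linarith) (by positivity)
      linarith
    linarith
  rw [← sub_nonneg]
  have : s ^ 2 * (Real.logb 2 a + d - Real.logb 2 a) / a + t ^ 2 * (Real.logb 2 a + d - (Real.logb 2 a + y)) / (a * β) + (s - t) ^ 2 / a - (s + t) ^ 2 * (Real.logb 2 a + d + 1 - (Real.logb 2 a + q)) / (a + a * β) = (s ^ 2 * d * β * (1 + β) + t ^ 2 * (d - y) * (1 + β) + (s - t) ^ 2 * β * (1 + β)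
      - (s + t) ^ 2 * (d + 1 - q) * β) / (a * β * (1 + β)) := by
    rw [show a + a * β = a * (1 + β) by ring]
    field_simp
    ring
  rw [this]
  positivity

lemma sum_fin_cons {α : Type*} [Fintype α] {n : ℕ} (g : (Fin (n + 1) → α) → ℝ) :
    ∑ x, g x = ∑ c : α, ∑ x : Fin n → α, g (Fin.cons c x) := by
  rw [← Equiv.sum_comp (Fin.consEquiv (fun _ : Fin (n + 1) => α)) g, Fintype.sum_prod_type]
  rfl

lemma sq_bound {ι : Type*} [Fintype ι] [DecidableEq ι] (A : Finset ι) (f g : ι → ℝ)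
    (hg : ∀ x, 0 ≤ g x) (hfA : ∀ x, x ∉ A → f x = 0) (h : ∑ x, g x ≤ ∑ x, f x) :
    (∑ x, f x - ∑ x, g x) ^ 2 ≤ A.card * ∑ x, (f x - g x) ^ 2 := by
  have h1 : ∑ x, f x = ∑ x ∈ A, f x :=
    (Finset.sum_subset (subset_univ A) (fun x _ hx => hfA x hx)).symm
  have h2 : ∑ x ∈ A, g x ≤ ∑ x, g x :=
    Finset.sum_le_sum_of_subset_of_nonneg (subset_univ A) (fun x _ _ => hg x)
  have h3 : (∑ x ∈ A, (f x - g x)) ^ 2 ≤ A.card * ∑ x ∈ A, (f x - g x) ^ 2 :=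
    sq_sum_le_card_mul_sum_sq
  have h4 : ∑ x ∈ A, (f x - g x) ^ 2 ≤ ∑ x, (f x - g x) ^ 2 :=
    Finset.sum_le_sum_of_subset_of_nonneg (subset_univ A) (fun x _ _ => sq_nonneg _)
  calc (∑ x, f x - ∑ x, g x) ^ 2 ≤ (∑ x ∈ A, (f x - g x)) ^ 2 := by
        rw [Finset.sum_sub_distrib]
        apply pow_le_pow_left₀ (by linarith)
        linarith
    _ ≤ _ := h3
    _ ≤ _ := by gcongr

lemma step_ordered {ι : Type*} [Fintype ι] [DecidableEq ι] (A B : Finset ι) (f g : ι → ℝ)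
    (hf : ∀ x, 0 ≤ f x) (hg : ∀ x, 0 ≤ g x) (hfA : ∀ x, x ∉ A → f x = 0)
    (hgB : ∀ x, x ∉ B → g x = 0) (m : ℝ) (hBA : B.card ≤ A.card)
    (hm : Real.logb 2 A.card ≤ m) :
    (∑ x, f x + ∑ x, g x) ^ 2 * (m + 1 - Real.logb 2 (A.card + B.card)) / (A.card + B.card) ≤
      (∑ x, f x) ^ 2 * (m - Real.logb 2 A.card) / A.card +
      (∑ x, g x) ^ 2 * (m - Real.logb 2 B.card) / B.card + ∑ x, (f x - g x) ^ 2 := by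
  have hBA' : (B.card : ℝ) ≤ A.card := by exact_mod_cast hBA
  have hQ : 0 ≤ ∑ x, (f x - g x) ^ 2 := Finset.sum_nonneg (fun x _ => sq_nonneg _)
  have hb : (∑ x, f x - ∑ x, g x) ^ 2 / A.card ≤ ∑ x, (f x - g x) ^ 2 := by
    apply div_le_of_le_mul₀ (by positivity) hQ
    rw [mul_comm]
    rcases le_total (∑ x, g x) (∑ x, f x) with h | h
    · exact sq_bound A f g hg hfA h
    · have h1 := sq_bound B g f hf hgB h
      have h2 : ∑ x, (g x - f x) ^ 2 = ∑ x, (f x - g x) ^ 2 :=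
        Finset.sum_congr rfl (fun x _ => by ring)
      rw [h2] at h1
      calc (∑ x, f x - ∑ x, g x) ^ 2 = (∑ x, g x - ∑ x, f x) ^ 2 := by ring
        _ ≤ _ := h1
        _ ≤ _ := by gcongr
  rcases Nat.eq_zero_or_pos B.card with h0 | h0
  · have hB : B = ∅ := Finset.card_eq_zero.1 h0
    have ht : ∑ x, g x = 0 := Finset.sum_eq_zero (fun x _ => hgB x (by simp [hB]))
    rw [ht] at hb ⊢
    rw [h0]
    have : (∑ x, f x + 0) ^ 2 * (m + 1 - Real.logb 2 (A.card + (0 : ℕ))) / (A.card + (0 : ℕ)) =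
      (∑ x, f x) ^ 2 * (m - Real.logb 2 A.card) / A.card + (∑ x, f x - 0) ^ 2 / A.card := by
      push_cast
      simp only [add_zero]
      ring
    rw [this]
    simp at hb ⊢
    exact hb
  · have := step_aux A.card B.card (∑ x, f x) (∑ x, g x) m (by exact_mod_cast h0) hBA' hm
    linarith

/-- Twice the Dirichlet form. -/
noncomputable def dir {n : ℕ} (f : (Fin n → Bool) → ℝ) : ℝ :=
  ∑ x, ∑ i, (f x - f (flipAt i x)) ^ 2

lemma dir_succ {n : ℕ} (f : (Fin (n + 1) → Bool) → ℝ) :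
    dir f = dir (fun x => f (Fin.cons false x)) + dir (fun x => f (Fin.cons true x)) +
      2 * ∑ x : Fin n → Bool, (f (Fin.cons false x) - f (Fin.cons true x)) ^ 2 := by
  have h0 : ∀ (c : Bool) (x : Fin n → Bool),
      flipAt 0 (Fin.cons c x : Fin (n + 1) → Bool) = Fin.cons (!c) x := by
    intro c x; simp [flipAt, Fin.update_cons_zero]
  have h1 : ∀ (c : Bool) (x : Fin n → Bool) (i : Fin n),
      flipAt i.succ (Fin.cons c x : Fin (n + 1) → Bool) = Fin.cons c (flipAt i x) := by
    intro c x i; simp [flipAt, Fin.cons_update]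
  unfold dir
  rw [sum_fin_cons]
  simp only [Fin.sum_univ_succ, h0, h1, Fintype.sum_bool, Finset.sum_add_distrib,
    Bool.not_true, Bool.not_false]
  have : ∑ x : Fin n → Bool, (f (Fin.cons true x) - f (Fin.cons false x)) ^ 2
      = ∑ x : Fin n → Bool, (f (Fin.cons false x) - f (Fin.cons true x)) ^ 2 :=
    Finset.sum_congr rfl (fun x _ => by ring)
  rw [this]
  ring

lemma logb_card_le {n : ℕ} (A : Finset (Fin n → Bool)) : Real.logb 2 A.card ≤ n := by
  rcases Nat.eq_zero_or_pos A.card with h | h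
  · simp [h]
  · rw [Real.logb_le_iff_le_rpow (by norm_num) (by exact_mod_cast h)]
    have := Finset.card_le_univ A
    simp at this
    rw [Real.rpow_natCast]
    exact_mod_cast this

lemma dir_lower : ∀ {n : ℕ} (A : Finset (Fin n → Bool)) (f : (Fin n → Bool) → ℝ)
    (_ : ∀ x, 0 ≤ f x) (_ : ∀ x, x ∉ A → f x = 0),
    (∑ x, f x) ^ 2 * (n - Real.logb 2 A.card) / A.card ≤ dir f / 2 := by
  intro n
  induction n with
  | zero =>
    intro A f hf hA
    have hd : dir f = 0 := by simp [dir]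
    rw [hd]
    rcases Nat.eq_zero_or_pos A.card with h | h
    · simp [h]
    · have : 0 ≤ Real.logb 2 A.card := Real.logb_nonneg (by norm_num) (by exact_mod_cast h)
      rw [zero_div]
      apply div_nonpos_of_nonpos_of_nonneg _ (by positivity)
      apply mul_nonpos_of_nonneg_of_nonpos (by positivity)
      push_cast; linarith
  | succ n ih =>
    intro A f hf hA
    let B : Bool → Finset (Fin n → Bool) := fun c => univ.filter (fun x => (Fin.cons c x : Fin (n + 1) → Bool) ∈ A)
    have hBm : ∀ c x, x ∈ B c ↔ (Fin.cons c x : Fin (n + 1) → Bool) ∈ A := by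
      intro c x; simp [B]
    have hcard : (A.card : ℝ) = (B false).card + (B true).card := by
      have e : (A.card : ℝ) = ∑ x, if x ∈ A then (1 : ℝ) else 0 := by simp
      rw [e, sum_fin_cons]
      simp [B, add_comm]
    have i0 := ih (B false) (fun x => f (Fin.cons false x)) (fun x => hf _)
      (fun x hx => hA _ (by rwa [hBm] at hx))
    have i1 := ih (B true) (fun x => f (Fin.cons true x)) (fun x => hf _)
      (fun x hx => hA _ (by rwa [hBm] at hx))
    have hs : ∑ x, f x = ∑ x : Fin n → Bool, f (Fin.cons false x) + ∑ x : Fin n → Bool, f (Fin.cons true x) := by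
      rw [sum_fin_cons]; simp [add_comm]
    rw [dir_succ, hs, hcard]
    push_cast
    rcases le_total (B true).card (B false).card with h | h
    · have := step_ordered (B false) (B true) (fun x => f (Fin.cons false x))
        (fun x => f (Fin.cons true x)) (fun x => hf _) (fun x => hf _)
        (fun x hx => hA _ (by rwa [hBm] at hx)) (fun x hx => hA _ (by rwa [hBm] at hx))
        n h (logb_card_le _)
      linarith
    · have := step_ordered (B true) (B false) (fun x => f (Fin.cons true x))
        (fun x => f (Fin.cons false x)) (fun x => hf _) (fun x => hf _)
        (fun x hx => hA _ (by rwa [hBm] at hx)) (fun x hx => hA _ (by rwa [hBm] at hx))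
        n h (logb_card_le _)
      have e : ∑ x : Fin n → Bool, (f (Fin.cons true x) - f (Fin.cons false x)) ^ 2
          = ∑ x : Fin n → Bool, (f (Fin.cons false x) - f (Fin.cons true x)) ^ 2 :=
        Finset.sum_congr rfl (fun x _ => by ring)
      rw [e, add_comm ((B true).card : ℝ), add_comm (∑ x : Fin n → Bool, f (Fin.cons true x))] at this
      linarith

/-- Number of walks in `A` of length `k` from `x`. -/
noncomputable def wk {n : ℕ} (A : Finset (Fin n → Bool)) : ℕ → (Fin n → Bool) → ℝ
  | 0, x => if x ∈ A then 1 else 0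
  | k + 1, x => if x ∈ A then ∑ i, wk A k (flipAt i x) else 0

/-- Being a walk in `A`. -/
def IsWk {n : ℕ} (A : Finset (Fin n → Bool)) (k : ℕ) (p : Fin (k + 1) → (Fin n → Bool)) : Prop :=
  (∀ j, p j ∈ A) ∧
      ∀ j : Fin k, (univ.filter fun i => p j.castSucc i ≠ p j.succ i).card = 1

lemma isWk_cons {n : ℕ} (A : Finset (Fin n → Bool)) (k : ℕ) (x : Fin n → Bool)
    (q : Fin (k + 1) → (Fin n → Bool)) :
    IsWk A (k + 1) (Fin.cons x q : Fin (k + 2) → (Fin n → Bool)) ↔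
      x ∈ A ∧ (univ.filter fun i => x i ≠ q 0 i).card = 1 ∧ IsWk A k q := by
  unfold IsWk
  rw [Fin.forall_fin_succ,
    Fin.forall_fin_succ (P := fun j : Fin (k + 1) => (univ.filter fun i =>
      (Fin.cons x q : Fin (k + 2) → (Fin n → Bool)) j.castSucc i ≠
      (Fin.cons x q : Fin (k + 2) → (Fin n → Bool)) j.succ i).card = 1)]
  simp only [Fin.cons_zero, Fin.cons_succ, Fin.castSucc_zero, ← Fin.succ_castSucc]
  tauto

open Classical in
lemma wk_eq {n : ℕ} (A : Finset (Fin n → Bool)) (k : ℕ) : ∀ (x : Fin n → Bool),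
    (∑ p : Fin (k + 1) → (Fin n → Bool),
      if p 0 = x then (if IsWk A k p then (1 : ℝ) else 0) else 0) = wk A k x := by
  induction k with
  | zero =>
    intro x
    rw [sum_fin_cons]
    simp only [Fin.cons_zero, wk, IsWk]
    rw [Finset.sum_eq_single x]
    · simp
    · intro b _ hb; simp [hb]
    · simp
  | succ k ih =>
    intro x
    rw [sum_fin_cons]
    simp only [Fin.cons_zero, isWk_cons]
    rw [Finset.sum_eq_single x]
    · simp only [if_true, wk]
      split_ifs with hx
      · simp only [hx, true_and, ← ih]
        rw [Finset.sum_comm]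
        apply Finset.sum_congr rfl
        intro q _
        have := adj_iff x (q 0)
        by_cases hq : IsWk A k q
        · simp only [hq, and_true, if_true]
          exact this
        · simp [hq]
      · simp [hx]
    · intro b _ hb; simp [hb]
    · simp

lemma walkCount_eq (n : ℕ) (A : Finset (Fin n → Bool)) (k : ℕ) :
    (walkCount n A k : ℝ) = ∑ x, wk A k x := by
  classical
  simp only [← wk_eq]
  rw [Finset.sum_comm]
  simp only [Finset.sum_ite_eq, Finset.mem_univ, if_true]
  rw [Finset.sum_boole]
  unfold walkCount IsWk
  congr!

lemma wk_nonneg {n : ℕ} (A : Finset (Fin n → Bool)) (k : ℕ) : ∀ x, 0 ≤ wk A k x := by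
  induction k with
  | zero => intro x; simp only [wk]; positivity
  | succ k ih =>
    intro x; simp only [wk]
    split_ifs
    · exact Finset.sum_nonneg (fun i _ => ih _)
    · exact le_rfl

lemma wk_off {n : ℕ} (A : Finset (Fin n → Bool)) (k : ℕ) (x) (hx : x ∉ A) : wk A k x = 0 := by
  cases k <;> simp [wk, hx]

lemma dir_eq {n : ℕ} (f : (Fin n → Bool) → ℝ) :
    dir f / 2 = ∑ x, f x * (n * f x - ∑ i, f (flipAt i x)) := by
  have h : ∑ x, ∑ i, f (flipAt i x) ^ 2 = ∑ x, n * f x ^ 2 := by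
    rw [Finset.sum_comm]
    simp [sum_flipAt _ (fun x => f x ^ 2), Finset.mul_sum]
  have h2 : dir f = ∑ x, n * f x ^ 2 + ∑ x, ∑ i, f (flipAt i x) ^ 2
      - 2 * ∑ x, f x * ∑ i, f (flipAt i x) := by
    unfold dir
    rw [Finset.mul_sum, ← Finset.sum_add_distrib, ← Finset.sum_sub_distrib]
    apply Finset.sum_congr rfl
    intro x _
    simp only [sub_sq, Finset.sum_add_distrib, Finset.sum_sub_distrib, Finset.mul_sum]
    simp
    have : ∑ i, 2 * f x * f (flipAt i x) = ∑ i, 2 * (f x * f (flipAt i x)) :=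
      Finset.sum_congr rfl (fun i _ => by ring)
    rw [this]; ring
  rw [h2, h]
  have : ∑ x, f x * (n * f x - ∑ i, f (flipAt i x)) =
      ∑ x, n * f x ^ 2 - ∑ x, f x * ∑ i, f (flipAt i x) := by
    rw [← Finset.sum_sub_distrib]
    exact Finset.sum_congr rfl (fun x _ => by ring)
  rw [this]; ring

lemma partial_bound (n : ℕ) (hn : 0 < n) (A : Finset (Fin n → Bool))
    (hA : A.Nonempty) (hA' : A.card < 2 ^ n) (K : ℕ) :
    ∑ k ∈ Finset.range K, (walkCount n A k : ℝ) / ((A.card : ℝ) * (n : ℝ) ^ k) ≤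
      (n : ℝ) / Real.logb 2 ((2 : ℝ) ^ n / (A.card : ℝ)) := by
  have ha : (0 : ℝ) < A.card := by exact_mod_cast hA.card_pos
  have hn' : (0 : ℝ) < n := by exact_mod_cast hn
  set L := Real.logb 2 ((2 : ℝ) ^ n / (A.card : ℝ)) with hL
  have hLe : L = n - Real.logb 2 A.card := by
    rw [hL, Real.logb_div (by positivity) ha.ne', Real.logb_pow]; simp
  have hLpos : 0 < L := by
    apply Real.logb_pos (by norm_num)
    rw [one_lt_div ha]; exact_mod_cast hA'
  set u : (Fin n → Bool) → ℝ := fun x => ∑ k ∈ Finset.range K, wk A k x / (n : ℝ) ^ k with hu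
  have u0 : ∀ x, 0 ≤ u x := fun x =>
    Finset.sum_nonneg (fun k _ => div_nonneg (wk_nonneg A k x) (by positivity))
  have uoff : ∀ x, x ∉ A → u x = 0 := fun x hx =>
    Finset.sum_eq_zero (fun k _ => by rw [wk_off A k x hx, zero_div])
  have hS : ∑ k ∈ Finset.range K, (walkCount n A k : ℝ) / ((A.card : ℝ) * (n : ℝ) ^ k)
      = (∑ x, u x) / A.card := by
    rw [hu, Finset.sum_comm, Finset.sum_div]
    apply Finset.sum_congr rfl
    intro k _
    rw [walkCount_eq, ← Finset.sum_div, div_div, mul_comm]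
  have hle : ∀ x ∈ A, n * u x - ∑ i, u (flipAt i x) ≤ n := by
    intro x hx
    have e1 : ∑ i, u (flipAt i x) = ∑ k ∈ Finset.range K, wk A (k + 1) x / (n : ℝ) ^ k := by
      rw [hu, Finset.sum_comm]
      apply Finset.sum_congr rfl
      intro k _
      rw [← Finset.sum_div]; simp [wk, hx]
    have e2 : ∑ k ∈ Finset.range K, wk A (k + 1) x / (n : ℝ) ^ k
        = n * ∑ k ∈ Finset.range K, wk A (k + 1) x / (n : ℝ) ^ (k + 1) := by
      rw [Finset.mul_sum]
      apply Finset.sum_congr rfl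
      intro k _
      rw [pow_succ]; field_simp
    have e3 := Finset.sum_range_succ' (fun k => wk A k x / (n : ℝ) ^ k) K
    rw [Finset.sum_range_succ] at e3
    have e4 : wk A 0 x / (n : ℝ) ^ 0 = 1 := by simp [wk, hx]
    have e5 : 0 ≤ wk A K x / (n : ℝ) ^ K := div_nonneg (wk_nonneg A K x) (by positivity)
    rw [e1, e2, ← mul_sub]
    have : u x - ∑ k ∈ Finset.range K, wk A (k + 1) x / (n : ℝ) ^ (k + 1) ≤ 1 := by
      simp only [hu]; linarith
    nlinarith
  have hup : dir u / 2 ≤ n * ∑ x, u x := by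
    rw [dir_eq, Finset.mul_sum]
    apply Finset.sum_le_sum
    intro x _
    by_cases hx : x ∈ A
    · rw [mul_comm]; exact mul_le_mul_of_nonneg_right (hle x hx) (u0 x)
    · simp [uoff x hx]
  have hlow := dir_lower A u u0 uoff
  rw [← hLe] at hlow
  have hfin := hlow.trans hup
  rw [hS]
  have hs0 : 0 ≤ ∑ x, u x := Finset.sum_nonneg (fun x _ => u0 x)
  rcases hs0.eq_or_lt with h | h
  · rw [← h, zero_div]; positivity
  · rw [div_le_iff₀ ha] at hfin
    rw [div_le_div_iff₀ ha hLpos]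
    have : (∑ x, u x) * ((∑ x, u x) * L) ≤ (∑ x, u x) * (n * A.card) := by linarith
    exact le_of_mul_le_mul_left this h

/-- Mean first exit time from `A` of the simple random walk started uniformly in `A`:
`E Y = ∑_{k≥0} Pr{Y > k}` where `Pr{Y > k} = walkCount k / (|A|·n^k)`.
Subcubes maximize it: `E Y ≤ n / log₂(2^n/|A|)`. -/
theorem mean_exit_time_le (n : ℕ) (A : Finset (Fin n → Bool))
    (hA : A.Nonempty) (hA' : A.card < 2 ^ n) :
    ∑' k : ℕ, (walkCount n A k : ℝ) / ((A.card : ℝ) * (n : ℝ) ^ k) ≤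
      (n : ℝ) / Real.logb 2 ((2 : ℝ) ^ n / (A.card : ℝ)) := by
  have hn : 0 < n := by
    rcases Nat.eq_zero_or_pos n with h | h
    · subst h
      have := hA.card_pos
      simp at hA'
      simp [hA'] at this
    · exact h
  exact Real.tsum_le_of_sum_range_le (fun k => by positivity) (partial_bound n hn A hA hA')
end

section
/- Let A be a subset of {0,1}^n with |∂A| ≤ (1+ε)·|A|·log₂(2^n/|A|) where ε = (ε'/(2n))·log₂(2^n/|A|) and 0 < ε' ≤ 1, and fix 0 < δ ≤ 1. For x uniform in A, let d_out(x) be the number of neighbors of x outside A. Then Pr[(1−δ)·log₂(2^n/|A|) ≤ d_out(x) ≤ (1+ε)(1+δ)·log₂(2^n/|A|)] ≥ 1 − ε'/δ². -/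
open Finset

/-- Flip coordinate `i`. -/
def nrFl {n : ℕ} (i : Fin n) (x : Fin n → Bool) : Fin n → Bool := Function.update x i (!x i)

noncomputable def nrEll (x : ℝ) : ℝ := x * Real.log x

noncomputable def nrPhi (a b : ℝ) : ℝ := nrEll (a + b) - nrEll a - nrEll b

noncomputable def nrLam {n : ℕ} (f : (Fin n → Bool) → ℝ) : ℝ :=
  nrEll (∑ x, f x) - ∑ x, nrEll (f x)

noncomputable def nrFour (a b c e : ℝ) : ℝ :=
  nrEll (a + b + c + e) - nrEll a - nrEll b - nrEll c - nrEll e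

theorem nrFl_fl {n : ℕ} (i : Fin n) (x : Fin n → Bool) : nrFl i (nrFl i x) = x := by
  unfold nrFl; simp

theorem nrFl_comm {n : ℕ} (i j : Fin n) (x : Fin n → Bool) :
    nrFl i (nrFl j x) = nrFl j (nrFl i x) := by
  by_cases h : i = j
  · subst h; rfl
  · unfold nrFl
    rw [Function.update_of_ne h, Function.update_of_ne (Ne.symm h), Function.update_comm h]

theorem nrSum_fl {n : ℕ} (i : Fin n) (g : (Fin n → Bool) → ℝ) :
    ∑ x, g (nrFl i x) = ∑ x, g x :=
  Equiv.sum_comp (Function.Involutive.toPerm (nrFl i) (nrFl_fl i)) g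

theorem nrFl_zero {n : ℕ} (b : Bool) (y : Fin n → Bool) :
    nrFl 0 (Fin.cons b y : Fin (n + 1) → Bool) = Fin.cons (!b) y := by
  unfold nrFl; simp

theorem nrFl_succ {n : ℕ} (i : Fin n) (b : Bool) (y : Fin n → Bool) :
    nrFl i.succ (Fin.cons b y : Fin (n + 1) → Bool) = Fin.cons b (nrFl i y) := by
  unfold nrFl; simp [Fin.cons_update]

theorem nrSum_cons {n : ℕ} (g : (Fin (n + 1) → Bool) → ℝ) :
    ∑ x, g x = ∑ y : Fin n → Bool, g (Fin.cons false y) + ∑ y : Fin n → Bool, g (Fin.cons true y) := by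
  rw [← Equiv.sum_comp (Fin.consEquiv (fun _ : Fin (n + 1) => Bool)) g, Fintype.sum_prod_type]
  simp [Fin.consEquiv, add_comm]

theorem nrPhi_comm (a b : ℝ) : nrPhi a b = nrPhi b a := by
  unfold nrPhi; rw [add_comm]; ring

theorem nrPhi_zero_left (b : ℝ) : nrPhi 0 b = 0 := by
  simp [nrPhi, nrEll]

theorem nrEll_mul_le {a c p : ℝ} (ha : 0 ≤ a) (hc : 0 < c) (hp : 0 < p) :
    a * Real.log c + a * Real.log p - nrEll a ≤ c * p - a := by
  unfold nrEll
  rcases ha.eq_or_lt with rfl | ha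
  · simp; positivity
  · have h := Real.log_le_sub_one_of_pos (show 0 < c * p / a by positivity)
    rw [Real.log_div (by positivity) ha.ne', Real.log_mul hc.ne' hp.ne'] at h
    have := mul_le_mul_of_nonneg_left h ha.le
    have e : a * (c * p / a - 1) = c * p - a := by field_simp
    nlinarith

theorem nrGibbs {a b A B : ℝ} (ha : 0 ≤ a) (hb : 0 ≤ b) (hA : 0 < A) (hB : 0 < B) :
    nrPhi a b ≤ a * (Real.log (A + B) - Real.log A) + b * (Real.log (A + B) - Real.log B) := by
  rcases (add_nonneg ha hb).eq_or_lt with h | h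
  · have h1 : a = 0 := by linarith
    have h2 : b = 0 := by linarith
    subst h1 h2; simp [nrPhi, nrEll]
  · have h1 := nrEll_mul_le ha h (show 0 < A / (A + B) by positivity)
    have h2 := nrEll_mul_le hb h (show 0 < B / (A + B) by positivity)
    rw [Real.log_div (by positivity) (by positivity)] at h1 h2
    have e : (a + b) * (A / (A + B)) + (a + b) * (B / (A + B)) = a + b := by field_simp
    have e2 : nrEll (a + b) = a * Real.log (a + b) + b * Real.log (a + b) := by
      unfold nrEll; ring
    unfold nrPhi
    rw [e2]
    nlinarith

theorem nrPhi_sum {ι : Type*} (s : Finset ι) (f g : ι → ℝ) (hf : ∀ x, 0 ≤ f x) (hg : ∀ x, 0 ≤ g x) :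
    ∑ x ∈ s, nrPhi (f x) (g x) ≤ nrPhi (∑ x ∈ s, f x) (∑ x ∈ s, g x) := by
  rcases (Finset.sum_nonneg (fun x (_ : x ∈ s) => hf x)).eq_or_lt with hA | hA
  · have := (Finset.sum_eq_zero_iff_of_nonneg (fun x (_ : x ∈ s) => hf x)).1 hA.symm
    rw [← hA, nrPhi_zero_left]
    refine (Finset.sum_eq_zero fun x hx => ?_).le
    rw [this x hx, nrPhi_zero_left]
  rcases (Finset.sum_nonneg (fun x (_ : x ∈ s) => hg x)).eq_or_lt with hB | hB
  · have := (Finset.sum_eq_zero_iff_of_nonneg (fun x (_ : x ∈ s) => hg x)).1 hB.symm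
    rw [← hB, nrPhi_comm, nrPhi_zero_left]
    refine (Finset.sum_eq_zero fun x hx => ?_).le
    rw [this x hx, nrPhi_comm, nrPhi_zero_left]
  refine (Finset.sum_le_sum fun x _ => nrGibbs (hf x) (hg x) hA hB).trans (le_of_eq ?_)
  rw [Finset.sum_add_distrib, ← Finset.sum_mul, ← Finset.sum_mul]
  unfold nrPhi nrEll; ring

theorem nrLam_cons {n : ℕ} (f : (Fin (n + 1) → Bool) → ℝ) :
    nrLam f = nrLam (fun y : Fin n → Bool => f (Fin.cons false y)) +
      nrLam (fun y : Fin n → Bool => f (Fin.cons true y)) +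
      nrPhi (∑ y : Fin n → Bool, f (Fin.cons false y)) (∑ y : Fin n → Bool, f (Fin.cons true y)) := by
  unfold nrLam nrPhi
  rw [nrSum_cons, nrSum_cons]; ring

theorem nrEdge (n : ℕ) : ∀ (f : (Fin n → Bool) → ℝ), (∀ x, 0 ≤ f x) →
    ∑ i, ∑ x, nrPhi (f x) (f (nrFl i x)) ≤ 2 * nrLam f := by
  induction n with
  | zero => intro f _; simp [nrLam]
  | succ n ih =>
    intro f hf
    rw [Fin.sum_univ_succ, nrLam_cons]
    have h0 := ih (fun y => f (Fin.cons false y)) (fun y => hf _)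
    have h1 := ih (fun y => f (Fin.cons true y)) (fun y => hf _)
    have h2 := nrPhi_sum univ (fun y : Fin n → Bool => f (Fin.cons false y))
      (fun y : Fin n → Bool => f (Fin.cons true y)) (fun y => hf _) (fun y => hf _)
    simp only [nrSum_cons, nrFl_zero, nrFl_succ, Finset.sum_add_distrib, Bool.not_false,
      Bool.not_true]
    have h3 : ∑ y : Fin n → Bool, nrPhi (f (Fin.cons true y)) (f (Fin.cons false y)) =
      ∑ y : Fin n → Bool, nrPhi (f (Fin.cons false y)) (f (Fin.cons true y)) :=
      Finset.sum_congr rfl fun y _ => nrPhi_comm _ _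
    rw [h3]
    linarith

theorem nrFour_eq (a b c e : ℝ) :
    nrFour a b c e = nrPhi a c + nrPhi b e + nrPhi (a + c) (b + e) := by
  unfold nrFour nrPhi
  rw [show a + c + (b + e) = a + b + c + e by ring]; ring

theorem nrFour_eq' (a b c e : ℝ) :
    nrFour a b c e = nrPhi a b + nrPhi c e + nrPhi (a + b) (c + e) := by
  unfold nrFour nrPhi
  rw [show a + b + (c + e) = a + b + c + e by ring]; ring

theorem nrPhi_two (a b : ℝ) : nrPhi (2 * a) (2 * b) = 2 * nrPhi a b := by
  unfold nrPhi nrEll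
  rw [← mul_add]
  rcases eq_or_ne a 0 with rfl | ha
  · simp
  rcases eq_or_ne b 0 with rfl | hb
  · simp
  rcases eq_or_ne (a + b) 0 with hab | hab
  · rw [hab, Real.log_mul two_ne_zero ha, Real.log_mul two_ne_zero hb]
    have : b = -a := by linarith
    subst this; simp
  · rw [Real.log_mul two_ne_zero ha, Real.log_mul two_ne_zero hb, Real.log_mul two_ne_zero hab]
    ring

theorem nrCross {n : ℕ} (f g : (Fin n → Bool) → ℝ) (hf : ∀ x, 0 ≤ f x) (hg : ∀ x, 0 ≤ g x)
    (j : Fin n) :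
    ∑ y, nrPhi (f y + f (nrFl j y)) (g y + g (nrFl j y)) ≤ 2 * nrPhi (∑ y, f y) (∑ y, g y) := by
  refine (nrPhi_sum univ _ _ (fun y => add_nonneg (hf _) (hf _))
    (fun y => add_nonneg (hg _) (hg _))).trans (le_of_eq ?_)
  rw [Finset.sum_add_distrib, Finset.sum_add_distrib, nrSum_fl, nrSum_fl, ← nrPhi_two, two_mul,
    two_mul]

theorem nrSquare (n : ℕ) : ∀ (f : (Fin n → Bool) → ℝ), (∀ x, 0 ≤ f x) →
    ∑ i, ∑ j, (if i = j then 0 else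
      ∑ x, nrFour (f x) (f (nrFl i x)) (f (nrFl j x)) (f (nrFl i (nrFl j x)))) ≤
      8 * ((n : ℝ) - 1) * nrLam f := by
  induction n with
  | zero => intro f _; simp [nrLam]
  | succ n ih =>
    intro f hf
    set f0 : (Fin n → Bool) → ℝ := fun y => f (Fin.cons false y) with hf0
    set f1 : (Fin n → Bool) → ℝ := fun y => f (Fin.cons true y) with hf1
    have p0 : ∀ y, 0 ≤ f0 y := fun y => hf _
    have p1 : ∀ y, 0 ≤ f1 y := fun y => hf _
    have h0 := ih f0 p0
    have h1 := ih f1 p1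
    have e0 := nrEdge n f0 p0
    have e1 := nrEdge n f1 p1
    have hc : ∑ j, ∑ y, nrPhi (f0 y + f0 (nrFl j y)) (f1 y + f1 (nrFl j y)) ≤
        n * (2 * nrPhi (∑ y, f0 y) (∑ y, f1 y)) := by
      refine (Finset.sum_le_sum fun j _ => nrCross f0 f1 p0 p1 j).trans (le_of_eq ?_)
      simp
    have key : ∑ i : Fin (n+1), ∑ j : Fin (n+1), (if i = j then 0 else
      ∑ x, nrFour (f x) (f (nrFl i x)) (f (nrFl j x)) (f (nrFl i (nrFl j x)))) =
      4 * (∑ i, ∑ x, nrPhi (f0 x) (f0 (nrFl i x)) + ∑ i, ∑ x, nrPhi (f1 x) (f1 (nrFl i x)) +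
        ∑ j, ∑ y, nrPhi (f0 y + f0 (nrFl j y)) (f1 y + f1 (nrFl j y))) +
      (∑ i, ∑ j, (if i = j then 0 else
        ∑ x, nrFour (f0 x) (f0 (nrFl i x)) (f0 (nrFl j x)) (f0 (nrFl i (nrFl j x)))) +
       ∑ i, ∑ j, (if i = j then 0 else
        ∑ x, nrFour (f1 x) (f1 (nrFl i x)) (f1 (nrFl j x)) (f1 (nrFl i (nrFl j x))))) := by
      rw [Fin.sum_univ_succ]
      simp only [Fin.sum_univ_succ (n := n)]
      have t1 : ∀ j : Fin n, (∑ x, nrFour (f x) (f (nrFl 0 x)) (f (nrFl j.succ x))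
          (f (nrFl 0 (nrFl j.succ x)))) = 2 * (∑ x, nrPhi (f0 x) (f0 (nrFl j x)) +
           ∑ x, nrPhi (f1 x) (f1 (nrFl j x)) +
           ∑ y, nrPhi (f0 y + f0 (nrFl j y)) (f1 y + f1 (nrFl j y))) := by
        intro j
        simp only [nrSum_cons, nrFl_zero, nrFl_succ, nrFour_eq, Finset.sum_add_distrib,
          Bool.not_false, Bool.not_true]
        simp only [hf0, hf1, nrPhi_comm (f (Fin.cons true _) + _)]
        ring
      have t2 : ∀ j : Fin n, (∑ x, nrFour (f x) (f (nrFl j.succ x)) (f (nrFl 0 x))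
          (f (nrFl j.succ (nrFl 0 x)))) = 2 * (∑ x, nrPhi (f0 x) (f0 (nrFl j x)) +
           ∑ x, nrPhi (f1 x) (f1 (nrFl j x)) +
           ∑ y, nrPhi (f0 y + f0 (nrFl j y)) (f1 y + f1 (nrFl j y))) := by
        intro j
        simp only [nrSum_cons, nrFl_zero, nrFl_succ, nrFour_eq', Finset.sum_add_distrib,
          Bool.not_false, Bool.not_true]
        simp only [hf0, hf1, nrPhi_comm (f (Fin.cons true _) + _)]
        ring
      have t3 : ∀ i j : Fin n, (∑ x, nrFour (f x) (f (nrFl i.succ x)) (f (nrFl j.succ x))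
          (f (nrFl i.succ (nrFl j.succ x)))) =
          ∑ x, nrFour (f0 x) (f0 (nrFl i x)) (f0 (nrFl j x)) (f0 (nrFl i (nrFl j x))) +
          ∑ x, nrFour (f1 x) (f1 (nrFl i x)) (f1 (nrFl j x)) (f1 (nrFl i (nrFl j x))) := by
        intro i j
        simp only [nrSum_cons, nrFl_succ, hf0, hf1]
      have u1 : ∀ i j : Fin n, (if i = j then (0:ℝ) else
          (∑ x, nrFour (f0 x) (f0 (nrFl i x)) (f0 (nrFl j x)) (f0 (nrFl i (nrFl j x))) +
          ∑ x, nrFour (f1 x) (f1 (nrFl i x)) (f1 (nrFl j x)) (f1 (nrFl i (nrFl j x))))) =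
          (if i = j then 0 else
          ∑ x, nrFour (f0 x) (f0 (nrFl i x)) (f0 (nrFl j x)) (f0 (nrFl i (nrFl j x)))) +
          (if i = j then 0 else
          ∑ x, nrFour (f1 x) (f1 (nrFl i x)) (f1 (nrFl j x)) (f1 (nrFl i (nrFl j x)))) := by
        intro i j; split_ifs <;> simp
      simp only [t1, t2, t3, Fin.succ_inj, Fin.succ_ne_zero, (Fin.succ_ne_zero _).symm, if_true,
        if_false, u1, Finset.sum_add_distrib, ← Finset.mul_sum]
      ring
    rw [key, nrLam_cons]
    push_cast
    change _ ≤ 8 * ((n : ℝ) + 1 - 1) * (nrLam f0 + nrLam f1 + nrPhi (∑ y, f0 y) (∑ y, f1 y))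
    nlinarith

theorem nrPoly {w : ℝ} (hw : w ^ 2 ≤ 9 / 50) :
    (1 + w) * Real.log (1 + w) + (1 - w) * Real.log (1 - w) ≤ w ^ 2 + 11 / 50 * w ^ 4 := by
  set P : ℝ → ℝ := fun w => w ^ 2 + 11 / 50 * w ^ 4 - ((1 + w) * Real.log (1 + w)) -
    ((1 - w) * Real.log (1 - w)) with hP
  set P1 : ℝ → ℝ := fun w => 2 * w + 44 / 50 * w ^ 3 - Real.log (1 + w) + Real.log (1 - w) with hP1
  have hb : ∀ x ∈ Set.Icc (-|w|) |w|, x ^ 2 ≤ 9 / 50 ∧ 0 < 1 + x ∧ 0 < 1 - x := by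
    intro x hx
    have h1 : |x| ≤ |w| := abs_le.2 hx
    have h2 : x ^ 2 ≤ w ^ 2 := sq_le_sq.2 h1
    refine ⟨by linarith, ?_, ?_⟩ <;> nlinarith
  have hd1 : ∀ x ∈ Set.Icc (-|w|) |w|, HasDerivAt P (P1 x) x := by
    intro x hx
    obtain ⟨h1, h2, h3⟩ := hb x hx
    have a1 : HasDerivAt (fun x : ℝ => 1 + x) 1 x := by simpa using (hasDerivAt_id x).const_add 1
    have a2 : HasDerivAt (fun x : ℝ => 1 - x) (-1) x := by simpa using (hasDerivAt_id x).const_sub 1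
    have b1 := a1.mul (a1.log h2.ne')
    have b2 := a2.mul (a2.log h3.ne')
    have c := (((hasDerivAt_pow 2 x).add ((hasDerivAt_pow 4 x).const_mul (11 / 50))).sub b1).sub b2
    refine c.congr_deriv ?_
    simp only [hP1]
    field_simp
    push_cast
    ring
  have hd2 : ∀ x ∈ Set.Icc (-|w|) |w|,
      HasDerivAt P1 (2 + 132 / 50 * x ^ 2 - 1 / (1 + x) - 1 / (1 - x)) x := by
    intro x hx
    obtain ⟨h1, h2, h3⟩ := hb x hx
    have a1 : HasDerivAt (fun x : ℝ => 1 + x) 1 x := by simpa using (hasDerivAt_id x).const_add 1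
    have a2 : HasDerivAt (fun x : ℝ => 1 - x) (-1) x := by simpa using (hasDerivAt_id x).const_sub 1
    have c := ((((hasDerivAt_id x).const_mul 2).add ((hasDerivAt_pow 3 x).const_mul (44 / 50))).sub
      (a1.log h2.ne')).add (a2.log h3.ne')
    refine c.congr_deriv ?_
    field_simp
    push_cast
    ring
  have hconv : ConvexOn ℝ (Set.Icc (-|w|) |w|) P := by
    refine convexOn_of_hasDerivWithinAt2_nonneg (f' := P1)
      (f'' := fun x => 2 + 132 / 50 * x ^ 2 - 1 / (1 + x) - 1 / (1 - x)) (convex_Icc _ _)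
      (fun x hx => (hd1 x hx).continuousAt.continuousWithinAt)
      (fun x hx => (hd1 x (interior_subset hx)).hasDerivWithinAt)
      (fun x hx => (hd2 x (interior_subset hx)).hasDerivWithinAt) ?_
    intro x hx
    obtain ⟨h1, h2, h3⟩ := hb x (interior_subset hx)
    have : 2 + 132 / 50 * x ^ 2 - 1 / (1 + x) - 1 / (1 - x) =
      (x ^ 2 * (32 / 50 - 132 / 50 * x ^ 2)) / ((1 + x) * (1 - x)) := by
      field_simp; ring
    show 0 ≤ 2 + 132 / 50 * x ^ 2 - 1 / (1 + x) - 1 / (1 - x)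
    rw [this]
    apply div_nonneg _ (by positivity)
    apply mul_nonneg (sq_nonneg _); linarith
  have m1 : w ∈ Set.Icc (-|w|) |w| := abs_le.1 le_rfl
  have m2 : -w ∈ Set.Icc (-|w|) |w| := abs_le.1 (abs_neg w).le
  have := hconv.2 m1 m2 (show (0:ℝ) ≤ 1/2 by norm_num) (show (0:ℝ) ≤ 1/2 by norm_num) (by norm_num)
  simp only [smul_eq_mul] at this
  rw [show (1:ℝ) / 2 * w + 1 / 2 * -w = 0 by ring] at this
  have e0 : P 0 = 0 := by simp [hP]
  have e1 : P (-w) = P w := by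
    simp only [hP]
    rw [show (1 : ℝ) + -w = 1 - w by ring, show (1 : ℝ) - -w = 1 + w by ring]; ring
  rw [e0, e1] at this
  have : 0 ≤ P w := by linarith
  simp only [hP] at this
  linarith

theorem nrPhi_lower {a b : ℝ} (ha : 0 < a) (hb : 0 < b)
    (h : (a - b) ^ 2 ≤ 9 / 50 * (a + b) ^ 2) :
    Real.log 2 * ((a + b) - 3 / 4 * ((a - b) ^ 2 / (a + b))) ≤ nrPhi a b := by
  have hs : 0 < a + b := by positivity
  set w := (a - b) / (a + b) with hw
  have hw2 : w ^ 2 ≤ 9 / 50 := by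
    rw [hw, div_pow, div_le_iff₀ (by positivity)]; exact h
  have hp := nrPoly hw2
  have e1 : 1 + w = 2 * a / (a + b) := by rw [hw]; field_simp; ring
  have e2 : 1 - w = 2 * b / (a + b) := by rw [hw]; field_simp; ring
  have hl : (0.6931471803 : ℝ) < Real.log 2 := Real.log_two_gt_d9
  have hp2 : (1 + w) * Real.log (1 + w) + (1 - w) * Real.log (1 - w) ≤ 3 / 2 * Real.log 2 * w ^ 2 := by
    have : w ^ 2 * (1 + 11 / 50 * w ^ 2) ≤ w ^ 2 * (3 / 2 * Real.log 2) :=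
      mul_le_mul_of_nonneg_left (by linarith) (sq_nonneg _)
    nlinarith
  rw [e1, e2, Real.log_div (by positivity) hs.ne', Real.log_div (by positivity) hs.ne',
    Real.log_mul two_ne_zero ha.ne', Real.log_mul two_ne_zero hb.ne'] at hp2
  have hp3 := mul_le_mul_of_nonneg_left hp2 hs.le
  have e3 : (a + b) * (2 * a / (a + b) * (Real.log 2 + Real.log a - Real.log (a + b)) +
    2 * b / (a + b) * (Real.log 2 + Real.log b - Real.log (a + b))) =
    2 * (a + b) * Real.log 2 - 2 * nrPhi a b := by
    unfold nrPhi nrEll; field_simp; ring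
  have e4 : (a + b) * (3 / 2 * Real.log 2 * w ^ 2) =
    3 / 2 * Real.log 2 * ((a - b) ^ 2 / (a + b)) := by
    rw [hw]; field_simp
  rw [e3, e4] at hp3
  nlinarith

theorem nrFour_lower {a b c e : ℝ} (ha : a = 0 ∨ a = 1) (hb : b = 0 ∨ b = 1) (hc : c = 0 ∨ c = 1)
    (he : e = 0 ∨ e = 1) :
    Real.log 2 * (2 * (a * b + c * e + a * c + b * e) + 3 / 4 * (a * b * c * (1 - e) +
      b * a * e * (1 - c) + c * e * a * (1 - b) + e * c * b * (1 - a))) ≤ nrFour a b c e := by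
  have h2 : 0 < Real.log 2 := Real.log_pos (by norm_num)
  have h3 : 19 * Real.log 2 ≤ 12 * Real.log 3 := by
    have : Real.log ((2 : ℝ) ^ 19) ≤ Real.log ((3 : ℝ) ^ 12) :=
      Real.log_le_log (by norm_num) (by norm_num)
    rw [Real.log_pow, Real.log_pow] at this
    exact_mod_cast this
  have h4 : Real.log 4 = 2 * Real.log 2 := by
    rw [show (4 : ℝ) = 2 ^ 2 by norm_num, Real.log_pow]; norm_num
  rcases ha with rfl | rfl <;> rcases hb with rfl | rfl <;> rcases hc with rfl | rfl <;>
    rcases he with rfl | rfl <;> norm_num [nrFour, nrEll, h4] <;> linarith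

set_option maxHeartbeats 2000000 in
theorem nrPair {σ l u l' u' : ℝ} (h0 : 0 < σ) (h1 : σ ≤ 1)
    (hl : l = 0 ∨ l = 1) (hu : u = 0 ∨ u = 1) (hl' : l' = 0 ∨ l' = 1) (hu' : u' = 0 ∨ u' = 1)
    (hlu : l * u = 0) (hlu' : l' * u' = 0) (hh : u = 1 ∨ u' = 1 → σ ≤ 1 / 2) :
    Real.log 2 * (((1 + σ * l - 3 / 4 * σ * u) + (1 + σ * l' - 3 / 4 * σ * u')) -
      (3 / 4 * σ ^ 2 / (2 + σ) * (l + l') + 27 / 64 * σ ^ 2 / (2 - 3 / 4 * σ) * (u + u') +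
        9 / 16 * σ ^ 2 * (l * u' + l' * u))) ≤
      nrPhi (1 + σ * l - 3 / 4 * σ * u) (1 + σ * l' - 3 / 4 * σ * u') := by
  have h2 : 0 < Real.log 2 := Real.log_pos (by norm_num)
  have main : ∀ a b K : ℝ, 0 < a → 0 < b → (a - b) ^ 2 ≤ 9 / 50 * (a + b) ^ 2 →
      3 / 4 * ((a - b) ^ 2 / (a + b)) ≤ K → Real.log 2 * ((a + b) - K) ≤ nrPhi a b := by
    intro a b K ha hb h hK
    refine le_trans ?_ (nrPhi_lower ha hb h)
    exact mul_le_mul_of_nonneg_left (by linarith) h2.le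
  have hX : σ ≤ 1 / 2 → 3 / 4 * ((7 / 4 * σ) ^ 2 / (2 + σ / 4)) ≤
      3 / 4 * σ ^ 2 / (2 + σ) + 27 / 64 * σ ^ 2 / (2 - 3 / 4 * σ) + 9 / 16 * σ ^ 2 := by
    intro hs
    have d1 : 0 < 2 + σ / 4 := by linarith
    have d2 : 0 < 2 + σ := by linarith
    have d3 : 0 < 2 - 3 / 4 * σ := by linarith
    have : 49 / 16 / (2 + σ / 4) ≤ 1 / (2 + σ) + 9 / 16 / (2 - 3 / 4 * σ) + 3 / 4 := by
      rw [div_add_div _ _ d2.ne' d3.ne', div_add_div _ _ (by positivity) (by norm_num),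
        div_le_div_iff₀ d1 (by positivity)]
      nlinarith [mul_nonneg h0.le (sub_nonneg.2 hs), mul_nonneg (mul_nonneg h0.le h0.le) (sub_nonneg.2 hs)]
    have := mul_le_mul_of_nonneg_left this (show 0 ≤ 3 / 4 * σ ^ 2 by positivity)
    calc _ = 3 / 4 * σ ^ 2 * (49 / 16 / (2 + σ / 4)) := by ring
      _ ≤ _ := this
      _ = _ := by ring
  have hL : 3 / 4 * (σ ^ 2 / (2 + σ)) ≤ 3 / 4 * σ ^ 2 / (2 + σ) := le_of_eq (by ring)
  have hU : 3 / 4 * ((3 / 4 * σ) ^ 2 / (2 - 3 / 4 * σ)) ≤ 27 / 64 * σ ^ 2 / (2 - 3 / 4 * σ) :=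
    le_of_eq (by ring)
  have d3 : 0 < 2 - 3 / 4 * σ := by linarith
  have zL : 0 ≤ 3 / 4 * σ ^ 2 / (2 + σ) := by positivity
  have zU : 0 ≤ 27 / 64 * σ ^ 2 / (2 - 3 / 4 * σ) := by positivity
  by_cases hs : σ ≤ 1 / 2
  · replace hX := hX hs
    rcases hl with rfl | rfl <;> rcases hu with rfl | rfl <;> rcases hl' with rfl | rfl <;>
      rcases hu' with rfl | rfl <;>
      first
      | (exfalso; revert hlu; norm_num; done)
      | (exfalso; revert hlu'; norm_num; done)
      | skip
    all_goals
      apply main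
      · linarith
      · linarith
      · clear hX hL hU zL zU main; nlinarith
      · first
        | (norm_num; done)
        | (convert hU using 2 <;> ring; done)
        | (convert hL using 2 <;> ring; done)
        | (convert hX using 2 <;> ring; done)
        | (norm_num; linarith)
  · have hu0 : u = 0 := hu.resolve_right fun h => hs (hh (Or.inl h))
    have hu0' : u' = 0 := hu'.resolve_right fun h => hs (hh (Or.inr h))
    subst hu0 hu0'
    rcases hl with rfl | rfl <;> rcases hl' with rfl | rfl
    all_goals
      apply main
      · linarith
      · linarith
      · clear hX hL hU zL zU main; nlinarith
      · first
        | (norm_num; done)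
        | (convert hL using 2 <;> ring; done)
        | (norm_num; linarith)

noncomputable def nrInd {n : ℕ} (A : Finset (Fin n → Bool)) (x : Fin n → Bool) : ℝ :=
  if x ∈ A then 1 else 0

noncomputable def nrDg {n : ℕ} (A : Finset (Fin n → Bool)) (x : Fin n → Bool) : ℝ :=
  ∑ i, nrInd A (nrFl i x)

theorem nrInd_cases {n : ℕ} (A : Finset (Fin n → Bool)) (x : Fin n → Bool) :
    nrInd A x = 0 ∨ nrInd A x = 1 := by
  unfold nrInd; split_ifs <;> simp

theorem nrInd_sum {n : ℕ} (A : Finset (Fin n → Bool)) : ∑ x, nrInd A x = (A.card : ℝ) := by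
  simp [nrInd]

theorem nrSum_ne {n : ℕ} (c : Fin n → ℝ) (i : Fin n) :
    ∑ j, (if i = j then 0 else c j) = ∑ j, c j - c i := by
  have : ∀ j, (if i = j then 0 else c j) = c j - (if i = j then c j else 0) := by
    intro j; split_ifs <;> simp
  simp only [this, Finset.sum_sub_distrib]
  simp

/-- bound on the number of three-quarter squares -/
theorem nrT_bound {n : ℕ} (A : Finset (Fin n → Bool)) :
    Real.log 2 * (8 * ((n : ℝ) - 1) * ∑ x, nrInd A x * nrDg A x +
      3 * ∑ i, ∑ j, ∑ x, nrInd A x * nrInd A (nrFl i x) * nrInd A (nrFl j x) *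
        (1 - nrInd A (nrFl i (nrFl j x)))) ≤
      8 * ((n : ℝ) - 1) * ((A.card : ℝ) * Real.log (A.card : ℝ)) := by
  set f := nrInd A with hf
  have hc : ∀ x, f x = 0 ∨ f x = 1 := nrInd_cases A
  have hnn : ∀ x, 0 ≤ f x := fun x => by rcases hc x with h | h <;> rw [h] <;> norm_num
  have hsq := nrSquare n f hnn
  have hlam : nrLam f = (A.card : ℝ) * Real.log (A.card : ℝ) := by
    unfold nrLam
    rw [hf, nrInd_sum, Finset.sum_eq_zero]
    · simp [nrEll]
    · intro x _
      rcases nrInd_cases A x with h | h <;> simp [h, nrEll]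
  rw [hlam] at hsq
  refine le_trans ?_ hsq
  set S : Fin n → ℝ := fun i => ∑ x, f x * f (nrFl i x) with hS
  set g : Fin n → Fin n → (Fin n → Bool) → ℝ := fun i j x =>
    f x * f (nrFl i x) * f (nrFl j x) * (1 - f (nrFl i (nrFl j x))) with hg
  have hij : ∀ i j : Fin n, Real.log 2 * (4 * (S i + S j) + 3 * ∑ x, g i j x) ≤
      ∑ x, nrFour (f x) (f (nrFl i x)) (f (nrFl j x)) (f (nrFl i (nrFl j x))) := by
    intro i j
    refine le_trans (le_of_eq ?_) (Finset.sum_le_sum fun x _ =>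
      nrFour_lower (hc x) (hc (nrFl i x)) (hc (nrFl j x)) (hc (nrFl i (nrFl j x))))
    rw [← Finset.mul_sum]
    congr 1
    have a1 : ∑ x, f (nrFl j x) * f (nrFl i (nrFl j x)) = S i :=
      nrSum_fl j (fun x => f x * f (nrFl i x))
    have a2 : ∑ x, f (nrFl i x) * f (nrFl i (nrFl j x)) = S j := by
      simp only [nrFl_comm i j]
      exact nrSum_fl i (fun x => f x * f (nrFl j x))
    have b1 : ∑ x, f (nrFl i x) * f x * f (nrFl i (nrFl j x)) * (1 - f (nrFl j x)) =
        ∑ x, g i j x := by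
      rw [← nrSum_fl i (g i j)]
      refine Finset.sum_congr rfl fun x _ => ?_
      simp only [hg, nrFl_fl, nrFl_comm j i]
    have b2 : ∑ x, f (nrFl j x) * f (nrFl i (nrFl j x)) * f x * (1 - f (nrFl i x)) =
        ∑ x, g i j x := by
      rw [← nrSum_fl j (g i j)]
      refine Finset.sum_congr rfl fun x _ => ?_
      simp only [hg, nrFl_fl]
    have b3 : ∑ x, f (nrFl i (nrFl j x)) * f (nrFl j x) * f (nrFl i x) * (1 - f x) =
        ∑ x, g i j x := by
      rw [← nrSum_fl i (g i j), ← nrSum_fl j (fun x => g i j (nrFl i x))]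
      refine Finset.sum_congr rfl fun x _ => ?_
      simp only [hg, nrFl_fl, nrFl_comm j i]
    simp only [mul_add, Finset.sum_add_distrib, ← Finset.mul_sum, a1, a2, b1, b2, b3]
    simp only [hS, hg]
    ring
  have hii : ∀ i, ∑ x, g i i x = 0 := by
    intro i
    refine Finset.sum_eq_zero fun x _ => ?_
    simp only [hg, nrFl_fl]
    rcases hc x with h | h <;> rw [h] <;> ring
  have hdeg : ∑ x, f x * nrDg A x = ∑ i, S i := by
    simp only [nrDg, hS, Finset.mul_sum]
    rw [Finset.sum_comm]
  calc _ = ∑ i, ∑ j, (if i = j then 0 else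
        Real.log 2 * (4 * (S i + S j) + 3 * ∑ x, g i j x)) := by
        simp only [nrSum_ne, hii, hdeg]
        simp only [Finset.sum_sub_distrib, ← Finset.mul_sum, Finset.sum_add_distrib,
          Finset.sum_const, Finset.card_univ, Fintype.card_fin, nsmul_eq_mul]
        simp only [hg]
        ring
    _ ≤ _ := by
        refine Finset.sum_le_sum fun i _ => Finset.sum_le_sum fun j _ => ?_
        split_ifs
        · exact le_rfl
        · exact hij i j

theorem nrJensen {n : ℕ} (A : Finset (Fin n → Bool)) (hA : A.Nonempty) (w : (Fin n → Bool) → ℝ)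
    (hpos : ∀ x ∈ A, 0 < w x) (hz : ∀ x, x ∉ A → w x = 0) :
    nrLam w ≤ (∑ x, w x) * Real.log (A.card : ℝ) := by
  have hM : (0 : ℝ) < A.card := by exact_mod_cast hA.card_pos
  have e1 : ∑ x, w x = ∑ x ∈ A, w x :=
    (Finset.sum_subset (Finset.subset_univ A) fun x _ hx => hz x hx).symm
  have e2 : ∑ x, nrEll (w x) = ∑ x ∈ A, nrEll (w x) :=
    (Finset.sum_subset (Finset.subset_univ A) fun x _ hx => by simp [hz x hx, nrEll]).symm
  have hW : 0 < ∑ x ∈ A, w x := Finset.sum_pos hpos hA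
  unfold nrLam
  rw [e1, e2]
  set W := ∑ x ∈ A, w x with hWd
  have h := Finset.sum_le_sum fun x (hx : x ∈ A) =>
    nrEll_mul_le (hpos x hx).le hW (inv_pos.2 hM)
  rw [Finset.sum_sub_distrib, Finset.sum_add_distrib, Finset.sum_sub_distrib, ← Finset.sum_mul,
    ← Finset.sum_mul, ← hWd, Finset.sum_const, nsmul_eq_mul, Real.log_inv] at h
  have : (A.card : ℝ) * (W * (A.card : ℝ)⁻¹) = W := by field_simp
  rw [this] at h
  have e : nrEll W = W * Real.log W := rfl
  rw [e]
  linarith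

set_option maxHeartbeats 4000000 in
theorem nrMain {n : ℕ} (A : Finset (Fin n → Bool)) (hA : A.Nonempty) (hn : 0 < n) (m s : ℝ)
    (hm : m * Real.log 2 = Real.log (A.card : ℝ)) (hs : 0 < s) (hsm : s ≤ n - m)
    (hm0 : 0 ≤ m) :
    ((∑ x, if x ∈ A ∧ m + s < nrDg A x then (1 : ℝ) else 0) +
      (∑ x, if x ∈ A ∧ nrDg A x < m - s then (1 : ℝ) else 0)) * s ^ 2 ≤
      2 * n * ((A.card : ℝ) * m - ∑ x, nrInd A x * nrDg A x) := by
  have hlog : 0 < Real.log 2 := Real.log_pos (by norm_num)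
  have hn' : (0 : ℝ) < n := by exact_mod_cast hn
  set f := nrInd A with hf
  set D := nrDg A with hD
  set l : (Fin n → Bool) → ℝ := fun x => if x ∈ A ∧ m + s < D x then (1 : ℝ) else 0 with hl
  set u : (Fin n → Bool) → ℝ := fun x => if x ∈ A ∧ D x < m - s then (1 : ℝ) else 0 with hu
  set σ : ℝ := s / n with hσ
  have hsσ : s = σ * n := by rw [hσ]; field_simp
  have hσ0 : 0 < σ := by positivity
  have hσ1 : σ ≤ 1 := by rw [hσ, div_le_one hn']; linarith
  have hf01 : ∀ x, f x = 0 ∨ f x = 1 := nrInd_cases A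
  have hfn : ∀ x, 0 ≤ f x := fun x => by rcases hf01 x with h | h <;> rw [h] <;> norm_num
  have hfl : ∀ x, f x ≤ 1 := fun x => by rcases hf01 x with h | h <;> rw [h] <;> norm_num
  have hDn : ∀ x, 0 ≤ D x := fun x => Finset.sum_nonneg fun i _ => hfn _
  have hl01 : ∀ x, l x = 0 ∨ l x = 1 := fun x => by simp only [hl]; split_ifs <;> simp
  have hu01 : ∀ x, u x = 0 ∨ u x = 1 := fun x => by simp only [hu]; split_ifs <;> simp
  have hlA : ∀ x, l x = 1 → x ∈ A ∧ m + s < D x := fun x h => by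
    by_contra h'; simp [hl, h'] at h
  have huA : ∀ x, u x = 1 → x ∈ A ∧ D x < m - s := fun x h => by
    by_contra h'; simp [hu, h'] at h
  have hl0 : ∀ x, x ∉ A → l x = 0 := fun x h => by simp [hl, h]
  have hu0 : ∀ x, x ∉ A → u x = 0 := fun x h => by simp [hu, h]
  have hf0 : ∀ x, x ∉ A → f x = 0 := fun x h => by simp [hf, nrInd, h]
  have hf1 : ∀ x, x ∈ A → f x = 1 := fun x h => by simp [hf, nrInd, h]
  have hlu : ∀ x, l x * u x = 0 := by
    intro x
    rcases hl01 x with h | h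
    · rw [h]; ring
    rcases hu01 x with h' | h'
    · rw [h']; ring
    have := (hlA x h).2; have := (huA x h').2; linarith
  have hhalf : ∀ x, u x = 1 → σ ≤ 1 / 2 := by
    intro x h
    have := (huA x h).2; have := hDn x
    rw [hσ, div_le_iff₀ hn']; linarith
  set w : (Fin n → Bool) → ℝ := fun x => f x + σ * l x - 3 / 4 * σ * u x with hw
  have hw0 : ∀ x, x ∉ A → w x = 0 := fun x h => by simp [hw, hl0 x h, hu0 x h, hf0 x h]
  have hwpos : ∀ x ∈ A, 0 < w x := by
    intro x h
    simp only [hw, hf1 x h]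
    rcases hl01 x with h1 | h1 <;> rcases hu01 x with h2 | h2 <;> rw [h1, h2] <;> linarith
  have hwn : ∀ x, 0 ≤ w x := fun x => by
    by_cases h : x ∈ A
    · exact (hwpos x h).le
    · exact (hw0 x h).ge
  set kL : ℝ := 3 / 4 * σ ^ 2 / (2 + σ) with hkL
  set kU : ℝ := 27 / 64 * σ ^ 2 / (2 - 3 / 4 * σ) with hkU
  set kX : ℝ := 9 / 16 * σ ^ 2 with hkX
  set G : Fin n → (Fin n → Bool) → ℝ := fun i x =>
    w x * f (nrFl i x) - kL * (l x * f (nrFl i x)) - kU * (u x * f (nrFl i x)) -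
      kX * (l x * u (nrFl i x)) with hG
  have hpt : ∀ i x, Real.log 2 * (G i x + G i (nrFl i x)) ≤ nrPhi (w x) (w (nrFl i x)) := by
    intro i x
    simp only [hG, nrFl_fl]
    by_cases h1 : x ∈ A
    · by_cases h2 : nrFl i x ∈ A
      · have := nrPair hσ0 hσ1 (hl01 x) (hu01 x) (hl01 (nrFl i x)) (hu01 (nrFl i x)) (hlu x)
          (hlu (nrFl i x)) (fun h => h.elim (hhalf _) (hhalf _))
        simp only [hw, hf1 _ h1, hf1 _ h2]
        refine le_trans (le_of_eq ?_) this
        ring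
      · rw [hw0 _ h2, nrPhi_comm, nrPhi_zero_left, hf0 _ h2, hu0 _ h2, hl0 _ h2]
        simp
    · rw [hw0 _ h1, nrPhi_zero_left, hf0 _ h1, hu0 _ h1, hl0 _ h1]
      simp
  set e : ℝ := ∑ i, ∑ x, l x * u (nrFl i x) with he
  have hC : ∑ x, w x * D x - kL * ∑ x, l x * D x - kU * ∑ x, u x * D x - kX * e ≤
      (∑ x, w x) * m := by
    have h1 : ∑ i, ∑ x, Real.log 2 * (G i x + G i (nrFl i x)) ≤ 2 * nrLam w :=
      (Finset.sum_le_sum fun i _ => Finset.sum_le_sum fun x _ => hpt i x).trans (nrEdge n w hwn)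
    have h2 := nrJensen A hA w hwpos hw0
    have h3 : ∀ i, ∑ x, Real.log 2 * (G i x + G i (nrFl i x)) = Real.log 2 * (2 * ∑ x, G i x) := by
      intro i
      rw [← Finset.mul_sum, Finset.sum_add_distrib, nrSum_fl i (G i)]; ring
    have h4 : ∑ i, ∑ x, G i x = ∑ x, w x * D x - kL * ∑ x, l x * D x - kU * ∑ x, u x * D x
        - kX * e := by
      have q : ∀ v : (Fin n → Bool) → ℝ, ∑ x, v x * D x = ∑ i, ∑ x, v x * f (nrFl i x) := by
        intro v
        simp only [hD, nrDg, Finset.mul_sum, hf]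
        rw [Finset.sum_comm]
      simp only [hG, Finset.sum_sub_distrib, ← Finset.mul_sum, q, he]
    simp only [h3, ← Finset.mul_sum, h4] at h1
    rw [← hm] at h2
    by_contra hcon
    push Not at hcon
    nlinarith [mul_lt_mul_of_pos_left hcon hlog]
  -- three-quarter squares
  set T : ℝ := ∑ i, ∑ j, ∑ x, f x * f (nrFl i x) * f (nrFl j x) * (1 - f (nrFl i (nrFl j x))) with hT
  have heT : 2 * s * e ≤ T := by
    rw [he, hT, Finset.mul_sum]
    refine Finset.sum_le_sum fun i _ => ?_
    rw [Finset.sum_comm, Finset.mul_sum]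
    refine Finset.sum_le_sum fun x _ => ?_
    have hnon : ∀ j, 0 ≤ f x * f (nrFl i x) * f (nrFl j x) * (1 - f (nrFl i (nrFl j x))) := fun j =>
      mul_nonneg (mul_nonneg (mul_nonneg (hfn _) (hfn _)) (hfn _)) (sub_nonneg.2 (hfl _))
    rcases hl01 x with h1 | h1
    · rw [h1]; simpa using Finset.sum_nonneg fun j _ => hnon j
    rcases hu01 (nrFl i x) with h2 | h2
    · rw [h2]; simpa using Finset.sum_nonneg fun j _ => hnon j
    obtain ⟨a1, a2⟩ := hlA x h1
    obtain ⟨b1, b2⟩ := huA _ h2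
    rw [h1, h2, hf1 _ a1, hf1 _ b1]
    have : D x - D (nrFl i x) ≤
        ∑ j, 1 * 1 * f (nrFl j x) * (1 - f (nrFl i (nrFl j x))) := by
      simp only [hD, nrDg]
      rw [← Finset.sum_sub_distrib]
      refine Finset.sum_le_sum fun j _ => ?_
      rw [nrFl_comm j i, ← hf]
      rcases hf01 (nrFl j x) with h | h <;> rw [h]
      · have := hfn (nrFl i (nrFl j x)); linarith
      · linarith
    linarith
  set η : ℝ := (A.card : ℝ) * m - ∑ x, f x * D x with hη
  have hTη : 3 * T ≤ 8 * ((n : ℝ) - 1) * η := by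
    have h := nrT_bound A
    rw [← hm] at h
    by_contra hcon
    push Not at hcon
    have := mul_lt_mul_of_pos_left hcon hlog
    rw [hη] at this
    nlinarith
  have hn1 : (1 : ℝ) ≤ n := by exact_mod_cast hn
  have he0 : 0 ≤ e := Finset.sum_nonneg fun i _ => Finset.sum_nonneg fun x _ => by
    rcases hl01 x with h1 | h1 <;> rcases hu01 (nrFl i x) with h2 | h2 <;> rw [h1, h2] <;> norm_num
  have hfin : σ * ∑ x, l x * (D x - m) - 3 / 4 * σ * ∑ x, u x * (D x - m) ≤
      η + kL * ∑ x, l x * D x + kU * ∑ x, u x * D x + kX * e := by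
    have e1 : ∑ x, w x * D x = ∑ x, f x * D x + σ * ∑ x, l x * D x - 3 / 4 * σ * ∑ x, u x * D x := by
      simp only [hw, Finset.mul_sum, ← Finset.sum_add_distrib, ← Finset.sum_sub_distrib]
      exact Finset.sum_congr rfl fun x _ => by ring
    have e2 : ∑ x, w x = A.card + σ * ∑ x, l x - 3 / 4 * σ * ∑ x, u x := by
      rw [← nrInd_sum A]
      simp only [hw, Finset.mul_sum, ← Finset.sum_add_distrib, ← Finset.sum_sub_distrib, hf]
    rw [e1, e2] at hC
    simp only [mul_sub, Finset.sum_sub_distrib, ← Finset.sum_mul]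
    rw [hη]
    nlinarith
  have d3 : 0 < 2 - 3 / 4 * σ := by linarith
  have kL0 : 0 ≤ kL := by positivity
  have kU0 : 0 ≤ kU := by positivity
  have kLσ : kL ≤ σ := by
    rw [hkL, div_le_iff₀ (by positivity)]; nlinarith
  set P := ∑ x, l x with hP
  set R := ∑ x, u x with hR
  have hPn : 0 ≤ P := Finset.sum_nonneg fun x _ => by
    rcases hl01 x with h1 | h1 <;> rw [h1]; norm_num
  have hRn : 0 ≤ R := Finset.sum_nonneg fun x _ => by
    rcases hu01 x with h1 | h1 <;> rw [h1]; norm_num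
  have hLs : P * (n * (σ ^ 2 - kL)) ≤ σ * ∑ x, l x * (D x - m) - kL * ∑ x, l x * D x := by
    rw [hP, Finset.sum_mul, Finset.mul_sum, Finset.mul_sum, ← Finset.sum_sub_distrib]
    refine Finset.sum_le_sum fun x _ => ?_
    rcases hl01 x with h1 | h1
    · rw [h1]; simp
    · obtain ⟨a1, a2⟩ := hlA x h1
      rw [h1]
      have q1 : (σ - kL) * (D x - (m + s)) ≥ 0 := mul_nonneg (by linarith) (by linarith)
      have q2 : kL * (n - (m + s)) ≥ 0 := mul_nonneg kL0 (by linarith)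
      have q3 : σ * s = n * σ ^ 2 := by rw [hsσ]; ring
      nlinarith
  have hUs : R * (n * (3 / 4 * σ ^ 2 - kU * (1 - 2 * σ))) ≤
      - (3 / 4 * σ * ∑ x, u x * (D x - m)) - kU * ∑ x, u x * D x := by
    rw [hR, Finset.sum_mul, Finset.mul_sum, Finset.mul_sum, ← Finset.sum_neg_distrib,
      ← Finset.sum_sub_distrib]
    refine Finset.sum_le_sum fun x _ => ?_
    rcases hu01 x with h1 | h1
    · rw [h1]; simp
    · obtain ⟨a1, a2⟩ := huA x h1
      rw [h1]
      have q1 : (3 / 4 * σ + kU) * (m - s - D x) ≥ 0 := mul_nonneg (by positivity) (by linarith)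
      have q2 : kU * (n - s - m) ≥ 0 := mul_nonneg kU0 (by linarith)
      have q3 : σ * s = n * σ ^ 2 := by rw [hsσ]; ring
      have q4 : n * (kU * (2 * σ)) = 2 * kU * s := by rw [hsσ]; ring
      nlinarith
  have hgoal : (P + R) * (n * (σ ^ 2 / 2)) ≤ η → (P + R) * s ^ 2 ≤ 2 * n * η := by
    intro h
    have := mul_le_mul_of_nonneg_left h (show (0:ℝ) ≤ 2 * n by positivity)
    refine le_trans (le_of_eq ?_) this
    rw [hsσ]; ring
  apply hgoal
  by_cases hex : ∃ x, u x = 1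
  · obtain ⟨x0, hx0⟩ := hex
    have hh := hhalf x0 hx0
    have gL : σ ^ 2 / 2 * (1 + 3 / 4 * σ) ≤ σ ^ 2 - kL := by
      have : 3 / 4 / (2 + σ) ≤ 1 / 2 - 3 / 8 * σ := by
        rw [div_le_iff₀ (by positivity)]; nlinarith
      have := mul_le_mul_of_nonneg_left this (sq_nonneg σ)
      have e : kL = σ ^ 2 * (3 / 4 / (2 + σ)) := by rw [hkL]; ring
      rw [e]; nlinarith
    have gU : σ ^ 2 / 2 * (1 + 3 / 4 * σ) ≤ 3 / 4 * σ ^ 2 - kU * (1 - 2 * σ) := by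
      have : 27 / 64 * (1 - 2 * σ) / (2 - 3 / 4 * σ) ≤ 1 / 4 - 3 / 8 * σ := by
        rw [div_le_iff₀ d3]; nlinarith
      have := mul_le_mul_of_nonneg_left this (sq_nonneg σ)
      have e : kU * (1 - 2 * σ) = σ ^ 2 * (27 / 64 * (1 - 2 * σ) / (2 - 3 / 4 * σ)) := by
        rw [hkU]; ring
      rw [e]; nlinarith
    have hη0 : 0 ≤ η ∨ (n : ℝ) = 1 := by
      by_cases h1 : (n : ℝ) = 1
      · exact Or.inr h1
      · left
        have h2 : 0 < (n : ℝ) - 1 := by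
          rcases hn1.lt_or_eq with h | h
          · linarith
          · exact absurd h.symm h1
        have h3 : 0 ≤ 8 * ((n : ℝ) - 1) * η := by
          have : 0 ≤ 2 * s * e := by positivity
          linarith
        by_contra hneg
        push Not at hneg
        nlinarith
    have hXe : kX * e ≤ 3 / 4 * σ * η ∨ e = 0 := by
      rcases hη0 with h | h
      · left
        have q : 3 * (2 * s * e) ≤ 8 * n * η := by nlinarith
        have q2 : 3 / 4 * σ * e ≤ η := by
          rw [hsσ] at q
          by_contra hcon
          push Not at hcon
          nlinarith
        have := mul_le_mul_of_nonneg_left q2 (show 0 ≤ 3 / 4 * σ by positivity)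
        rw [hkX]; nlinarith
      · right
        rw [h] at hTη
        nlinarith
    have hsum : (P + R) * (n * (σ ^ 2 / 2 * (1 + 3 / 4 * σ))) ≤ η + kX * e := by
      have q1 := mul_le_mul_of_nonneg_left (mul_le_mul_of_nonneg_left gL hn'.le) hPn
      have q2 := mul_le_mul_of_nonneg_left (mul_le_mul_of_nonneg_left gU hn'.le) hRn
      linarith
    rcases hXe with h | h
    · by_contra hcon
      push Not at hcon
      have := mul_lt_mul_of_pos_right hcon (show 0 < 1 + 3 / 4 * σ by positivity)
      nlinarith
    · rw [h] at hsum
      have : 0 ≤ (P + R) * (n * (σ ^ 2 / 2 * (3 / 4 * σ))) := by positivity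
      nlinarith
  · push Not at hex
    have hu00 : ∀ x, u x = 0 := fun x => (hu01 x).resolve_right (hex x)
    have R0 : R = 0 := by simp [hR, hu00]
    have e0 : e = 0 := by simp [he, hu00]
    have gL : σ ^ 2 / 2 ≤ σ ^ 2 - kL := by
      have : 3 / 4 / (2 + σ) ≤ 1 / 2 := by
        rw [div_le_iff₀ (by positivity)]; nlinarith
      have := mul_le_mul_of_nonneg_left this (sq_nonneg σ)
      have e : kL = σ ^ 2 * (3 / 4 / (2 + σ)) := by rw [hkL]; ring
      rw [e]; nlinarith
    have q1 := mul_le_mul_of_nonneg_left (mul_le_mul_of_nonneg_left gL hn'.le) hPn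
    rw [R0] at hUs ⊢
    rw [e0] at hfin
    linarith

theorem nrOne {n : ℕ} (x y : Fin n → Bool) :
    (univ.filter fun i => x i ≠ y i).card = 1 ↔ ∃ i, nrFl i x = y := by
  rw [Finset.card_eq_one]
  constructor
  · rintro ⟨i, hi⟩
    refine ⟨i, funext fun j => ?_⟩
    have hj := Finset.ext_iff.1 hi j
    simp only [Finset.mem_filter, Finset.mem_univ, true_and, Finset.mem_singleton] at hj
    unfold nrFl
    by_cases h : j = i
    · subst h
      have := hj.2 rfl
      rw [Function.update_self]
      revert this
      cases x j <;> cases y j <;> simp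
    · rw [Function.update_of_ne h]
      by_contra h'
      exact h (hj.1 h')
  · rintro ⟨i, rfl⟩
    refine ⟨i, ?_⟩
    ext j
    simp only [Finset.mem_filter, Finset.mem_univ, true_and, Finset.mem_singleton]
    unfold nrFl
    by_cases h : j = i
    · subst h; simp
    · simp [h]

theorem nrOut {n : ℕ} (A : Finset (Fin n → Bool)) (x : Fin n → Bool) :
    ((univ.filter (fun y => y ∉ A ∧ (univ.filter fun i => x i ≠ y i).card = 1)).card : ℝ) =
      n - nrDg A x := by
  have h1 : (univ.filter (fun y => y ∉ A ∧ (univ.filter fun i => x i ≠ y i).card = 1)) =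
      (univ.filter (fun i => nrFl i x ∉ A)).image (fun i => nrFl i x) := by
    ext y
    simp only [Finset.mem_filter, Finset.mem_univ, true_and, Finset.mem_image, nrOne]
    constructor
    · rintro ⟨h, i, rfl⟩; exact ⟨i, h, rfl⟩
    · rintro ⟨i, h, rfl⟩; exact ⟨h, i, rfl⟩
  have hinj : Function.Injective (fun i => nrFl i x) := by
    intro i j hij
    by_contra hne
    have := congrFun hij i
    simp [nrFl, hne] at this
  rw [h1, Finset.card_image_of_injective _ hinj]
  have h2 : nrDg A x = ((univ.filter (fun i => nrFl i x ∈ A)).card : ℝ) := by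
    simp [nrDg, nrInd]
  rw [h2]
  have h3 := Finset.card_filter_add_card_filter_not (s := (univ : Finset (Fin n)))
    (fun i => nrFl i x ∈ A)
  rw [Finset.card_univ, Fintype.card_fin] at h3
  have h4 : (((univ.filter (fun i => nrFl i x ∈ A)).card : ℝ) +
    (univ.filter (fun i => nrFl i x ∉ A)).card) = n := by exact_mod_cast h3
  linarith

theorem nrBd {n : ℕ} (A : Finset (Fin n → Bool)) :
    ((((univ : Finset (Fin n → Bool)) ×ˢ (univ : Finset (Fin n → Bool))).filter
        (fun p => p.1 ∈ A ∧ p.2 ∉ A ∧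
          (univ.filter fun i => p.1 i ≠ p.2 i).card = 1)).card : ℝ) =
      n * A.card - ∑ x, nrInd A x * nrDg A x := by
  rw [Finset.card_filter, Finset.sum_product]
  push_cast
  have : ∀ x, (∑ y, if x ∈ A ∧ y ∉ A ∧ (univ.filter fun i => x i ≠ y i).card = 1 then (1:ℝ) else 0) =
      nrInd A x * (n - nrDg A x) := by
    intro x
    rw [← nrOut]
    by_cases h : x ∈ A <;> simp [h, nrInd]
  simp only [this, mul_sub, Finset.sum_sub_distrib, ← Finset.sum_mul, nrInd_sum]
  ring

/-- Nearly-isoperimetric sets are nearly regular: if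
`|∂A| ≤ (1+ε)·|A|·log₂(2^n/|A|)` with `ε = (ε'/(2n))·log₂(2^n/|A|)`, `0 < ε' ≤ 1`, and
`0 < δ ≤ 1`, then for `x` uniform in `A`, the outdegree `d_out(x)` lies in
`[(1-δ)·log₂(2^n/|A|), (1+ε)(1+δ)·log₂(2^n/|A|)]` with probability at least `1 - ε'/δ²`. -/
theorem nearly_isoperimetric_nearly_regular (n : ℕ) (A : Finset (Fin n → Bool))
    (hA : A.Nonempty) (hA' : A.card < 2 ^ n)
    (ε ε' δ : ℝ) (hε'0 : 0 < ε') (hε'1 : ε' ≤ 1) (hδ0 : 0 < δ) (hδ1 : δ ≤ 1)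
    (hε : ε = ε' / (2 * n) * Real.logb 2 ((2 : ℝ) ^ n / (A.card : ℝ)))
    (hiso : ((((univ : Finset (Fin n → Bool)) ×ˢ (univ : Finset (Fin n → Bool))).filter
        (fun p => p.1 ∈ A ∧ p.2 ∉ A ∧
          (univ.filter fun i => p.1 i ≠ p.2 i).card = 1)).card : ℝ) ≤
      (1 + ε) * (A.card : ℝ) * Real.logb 2 ((2 : ℝ) ^ n / (A.card : ℝ))) :
    (((A.filter (fun x =>
        (1 - δ) * Real.logb 2 ((2 : ℝ) ^ n / (A.card : ℝ)) ≤
          ((univ.filter (fun y => y ∉ A ∧ (univ.filter fun i => x i ≠ y i).card = 1)).card : ℝ) ∧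
        ((univ.filter (fun y => y ∉ A ∧ (univ.filter fun i => x i ≠ y i).card = 1)).card : ℝ) ≤
          (1 + ε) * (1 + δ) * Real.logb 2 ((2 : ℝ) ^ n / (A.card : ℝ)))).card : ℝ) / (A.card : ℝ))
      ≥ 1 - ε' / δ ^ 2 := by
  have hM : (0 : ℝ) < A.card := by exact_mod_cast hA.card_pos
  have hM1 : (1 : ℝ) ≤ A.card := by exact_mod_cast hA.card_pos
  have hlog : 0 < Real.log 2 := Real.log_pos (by norm_num)
  have hn : 0 < n := by
    rcases Nat.eq_zero_or_pos n with rfl | h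
    · have := hA.card_pos; simp at hA'; simp [hA'] at hA
    · exact h
  have hn' : (0 : ℝ) < n := by exact_mod_cast hn
  set m : ℝ := Real.log (A.card : ℝ) / Real.log 2 with hm
  have hmlog : m * Real.log 2 = Real.log (A.card : ℝ) := by rw [hm]; field_simp
  have hd : Real.logb 2 ((2 : ℝ) ^ n / (A.card : ℝ)) = n - m := by
    rw [Real.logb, Real.log_div (by positivity) hM.ne', Real.log_pow, hm]; field_simp
  have hdpos : 0 < (n : ℝ) - m := by
    rw [← hd]
    apply Real.logb_pos (by norm_num)
    rw [one_lt_div hM]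
    exact_mod_cast hA'
  have hm0 : 0 ≤ m := div_nonneg (Real.log_nonneg hM1) hlog.le
  rw [hd] at hε hiso
  rw [nrBd] at hiso
  simp only [hd, nrOut]
  set d : ℝ := n - m with hdd
  have hε0 : 0 ≤ ε := by rw [hε]; positivity
  have hmain := nrMain A hA hn m (δ * d) hmlog (by positivity) (by nlinarith) hm0
  set P := ∑ x, if x ∈ A ∧ m + δ * d < nrDg A x then (1 : ℝ) else 0 with hP
  set R := ∑ x, if x ∈ A ∧ nrDg A x < m - δ * d then (1 : ℝ) else 0 with hR
  set g := A.filter (fun x => (1 - δ) * d ≤ n - nrDg A x ∧ n - nrDg A x ≤ (1 + ε) * (1 + δ) * d)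
    with hg
  have hcount : (A.card : ℝ) ≤ g.card + (P + R) := by
    have e1 : (g.card : ℝ) = ∑ x, if x ∈ A ∧ ((1 - δ) * d ≤ n - nrDg A x ∧
        n - nrDg A x ≤ (1 + ε) * (1 + δ) * d) then (1 : ℝ) else 0 := by
      rw [hg, Finset.card_filter]
      push_cast
      rw [← Finset.sum_filter, ← Finset.sum_filter]
      congr 1
      ext x; simp
    rw [e1, ← nrInd_sum, hP, hR, ← Finset.sum_add_distrib, ← Finset.sum_add_distrib]
    refine Finset.sum_le_sum fun x _ => ?_
    unfold nrInd
    by_cases hx : x ∈ A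
    · simp only [hx, true_and, if_true]
      by_cases h1 : m + δ * d < nrDg A x
      · rw [if_pos h1]
        split_ifs <;> norm_num
      · by_cases h2 : nrDg A x < m - δ * d
        · rw [if_pos h2]
          split_ifs <;> norm_num
        · rw [if_pos]
          · split_ifs; norm_num
          · push Not at h1 h2
            constructor
            · linarith
            · have : 0 ≤ ε * ((1 + δ) * d) := by positivity
              linarith
    · simp [hx]
  have hη : (A.card : ℝ) * m - ∑ x, nrInd A x * nrDg A x ≤ ε * A.card * d := by
    have : (A.card : ℝ) * d = n * A.card - A.card * m := by rw [hdd]; ring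
    linarith
  have hb : (P + R) * δ ^ 2 ≤ ε' * A.card := by
    have h1 : (P + R) * (δ * d) ^ 2 ≤ 2 * n * (ε * A.card * d) :=
      hmain.trans (mul_le_mul_of_nonneg_left hη (by positivity))
    have h2 : 2 * n * (ε * A.card * d) = ε' * A.card * d ^ 2 := by
      rw [hε]; field_simp
    rw [h2] at h1
    have hd2 : 0 < d ^ 2 := by positivity
    refine le_of_mul_le_mul_right ?_ hd2
    linarith
  have hδ2 : 0 < δ ^ 2 := by positivity
  rw [ge_iff_le, le_div_iff₀ hM, sub_mul, one_mul, div_mul_eq_mul_div]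
  have : P + R ≤ ε' * A.card / δ ^ 2 := by rwa [le_div_iff₀ hδ2]
  linarith
end
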